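/- In the Heisenberg group H^n with a rotationally invariant homogeneous distance, there is a single constant C ∈ [1, 2^{2n+1}] such that S^{2n+1}⌊R = C · H^{2n+1}⌊R for every (H^n, ℝ)-rectifiable set R ⊂ H^n. -/

import Mathlib

open scoped ENNReal

/-- The `n`-th Heisenberg group in exponential coordinates `(x, y, t) ∈ ℝⁿ × ℝⁿ × ℝ`. -/
abbrev Heis (n : ℕ) : Type := (Fin n → ℝ) × (Fin n → ℝ) × ℝ

/-- The Heisenberg group product. -/
noncomputable def heisMul {n : ℕ} (p q : Heis n) : Heis n :=
  (p.1 + q.1, p.2.1 + q.2.1,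
    p.2.2 + q.2.2 + (∑ j, (p.1 j * q.2.1 j - q.1 j * p.2.1 j)) / 2)

/-- The Heisenberg group inverse. -/
noncomputable def heisInv {n : ℕ} (p : Heis n) : Heis n := (-p.1, -p.2.1, -p.2.2)

/-- The Heisenberg dilations `δ_λ(x,y,t) = (λx, λy, λ²t)`. -/
noncomputable def heisDil {n : ℕ} (lam : ℝ) (p : Heis n) : Heis n :=
  (lam • p.1, lam • p.2.1, lam ^ 2 * p.2.2)

/-- The squared Euclidean norm of the horizontal component. -/
noncomputable def horSq {n : ℕ} (x y : Fin n → ℝ) : ℝ := ∑ i, (x i ^ 2 + y i ^ 2)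

/-- The `d`-dimensional spherical Hausdorff measure associated with a distance function
`ρ`, as a set function. -/
noncomputable def sphMeasFun {X : Type*} (ρ : X → X → ℝ) (d : ℝ) (E : Set X) : ℝ≥0∞ :=
  ⨆ (ε : ℝ) (_ : 0 < ε),
    ⨅ (c : ℕ → X) (r : ℕ → ℝ)
      (_ : E ⊆ ⋃ m, {x : X | ρ (c m) x ≤ r m}) (_ : ∀ m, 0 < r m ∧ 2 * r m < ε),
      ∑' m, ENNReal.ofReal (2 * r m) ^ d

/-- The diameter, in `ℝ≥0∞`, of a set with respect to a distance function `ρ`. -/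
noncomputable def diamFun {X : Type*} (ρ : X → X → ℝ) (s : Set X) : ℝ≥0∞ :=
  ⨆ (x : X) (_ : x ∈ s) (y : X) (_ : y ∈ s), ENNReal.ofReal (ρ x y)

/-- The `d`-dimensional Hausdorff measure associated with a distance function `ρ`,
as a set function. -/
noncomputable def hausMeasFun {X : Type*} (ρ : X → X → ℝ) (d : ℝ) (E : Set X) : ℝ≥0∞ :=
  ⨆ (ε : ℝ≥0∞) (_ : 0 < ε),
    ⨅ (t : ℕ → Set X) (_ : E ⊆ ⋃ m, t m) (_ : ∀ m, diamFun ρ (t m) < ε),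
      ∑' m, diamFun ρ (t m) ^ d

/-- A homogeneous morphism `Heis n → ℝ`. -/
def IsHeisHomMorphR {n : ℕ} (L : Heis n → ℝ) : Prop :=
  (∀ p q : Heis n, L (heisMul p q) = L p + L q) ∧
    ∀ lam : ℝ, 0 < lam → ∀ p : Heis n, L (heisDil lam p) = lam * L p

/-- A homogeneous subgroup of `Heis n`. -/
def IsHeisHomSubgroup {n : ℕ} (S : Set (Heis n)) : Prop :=
  (0 : Heis n) ∈ S ∧ (∀ p ∈ S, ∀ q ∈ S, heisMul p q ∈ S) ∧ (∀ p ∈ S, heisInv p ∈ S) ∧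
    ∀ lam : ℝ, 0 < lam → ∀ p ∈ S, heisDil lam p ∈ S

/-- `Sig` is a `C¹_H` hypersurface of `H^n` (with homogeneous distance `ρ`): locally the
noncritical level set of a real-valued `C¹_H` (Pansu differentiable with continuous
differential) function, all of whose points are split-regular. -/
def IsC1HHypersurface {n : ℕ} (ρ : Heis n → Heis n → ℝ) (Sig : Set (Heis n)) : Prop :=
  ∀ p ∈ Sig, ∃ (Ω : Set (Heis n)) (f : Heis n → ℝ) (D : Heis n → Heis n → ℝ),
    IsOpen Ω ∧ p ∈ Ω ∧ Sig ∩ Ω = {x ∈ Ω | f x = 0} ∧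
    (∀ q ∈ Ω, IsHeisHomMorphR (D q) ∧
      ∀ ε : ℝ, 0 < ε → ∃ r > 0, ∀ x : Heis n, ρ q x < r →
        |f x - f q - D q (heisMul (heisInv q) x)| ≤ ε * ρ q x) ∧
    (∀ q ∈ Ω, ∀ ε : ℝ, 0 < ε → ∃ r > 0, ∀ q' ∈ Ω, ρ q q' < r →
      ∀ x : Heis n, |D q x - D q' x| ≤ ε * ρ 0 x) ∧
    (∀ q ∈ Ω, D q ≠ 0 ∧
      ∃ V : Set (Heis n), IsHeisHomSubgroup V ∧
        (∀ x ∈ V, D q x = 0 → x = 0) ∧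
        ∀ g : Heis n, ∃ w : Heis n, D q w = 0 ∧ ∃ v ∈ V, g = heisMul w v)

/-!
Fix a coordinate `i` and let `Θ` denote the density of a gauge (balls for the spherical measure,
sets of bounded diameter for the Hausdorff measure): the largest Lebesgue measure that a set of
size one of the gauge cuts out of the vertical hyperplane `{x_i = 0}`. Near a noncritical point, a
rotation turns the tangent plane of a `C¹_H` level set into that hyperplane. Lebesgue measure on
the hyperplane, pulled back along the projection `g ↦ g · exp(-x_i(g) X_i)`, is then a surface
measure on the level set, and at small scales the level set fills the enlarged sets of the gauge
just as its tangent plane does. The density theorems for gauge measures therefore show that `Θ`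
times the gauge measure is the surface measure, up to a factor that tends to one with the size of
the neighbourhood. Covering by countably many such neighbourhoods, `Θ` times the gauge measure is
the same for both gauges, so `C = Θ_Hausdorff / Θ_spherical`. Finally `1 ≤ C ≤ 2 ^ (2n+1)`, because
a ball of radius `r` has diameter at most `2r` and a set of diameter `δ` lies in a ball of
radius `δ`.
-/

section GaugeMeasure

open Set Filter Topology MeasureTheory

variable {X : Type*} {F : Set (Set X × ℝ)} {d ε : ℝ}

/-- The size-`ε` outer measure of Carathéodory's construction: the family `F` lists the admissible
covering sets, each paired with its size `δ`, and a covering set costs `δ ^ d`. -/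
noncomputable def gaugePre (F : Set (Set X × ℝ)) (d ε : ℝ) : OuterMeasure X :=
  OuterMeasure.boundedBy fun s => ⨅ (δ : ℝ) (_ : (s, δ) ∈ F ∧ δ < ε), ENNReal.ofReal δ ^ d

/-- The `d`-dimensional outer measure of Carathéodory's construction for the gauge `F`. Balls paired
with their doubled radius give the spherical measure, sets paired with bounds on their diameter
give the Hausdorff measure. -/
noncomputable def gaugeMeasure (F : Set (Set X × ℝ)) (d : ℝ) : OuterMeasure X :=
  ⨆ (ε : ℝ) (_ : 0 < ε), gaugePre F d ε

lemma gaugePre_le {e : Set X × ℝ} (he : e ∈ F) (hε : e.2 < ε) :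
    gaugePre F d ε e.1 ≤ ENNReal.ofReal e.2 ^ d :=
  (OuterMeasure.boundedBy_le _).trans (iInf₂_le e.2 ⟨he, hε⟩)

lemma le_gaugePre_iff {μ : OuterMeasure X} :
    μ ≤ gaugePre F d ε ↔ ∀ e ∈ F, e.2 < ε → μ e.1 ≤ ENNReal.ofReal e.2 ^ d := by
  simp only [gaugePre, OuterMeasure.le_boundedBy, le_iInf_iff, Prod.forall, and_imp]

lemma gaugePre_anti (F : Set (Set X × ℝ)) (d : ℝ) : Antitone (gaugePre F d) := fun _ _ h =>
  le_gaugePre_iff.2 fun _ he hε => gaugePre_le he (hε.trans_le h)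

lemma gaugePre_le_gaugeMeasure (hε : 0 < ε) : gaugePre F d ε ≤ gaugeMeasure F d :=
  le_iSup₂_of_le ε hε le_rfl

lemma gaugeMeasure_apply (A : Set X) :
    gaugeMeasure F d A = ⨆ (ε : ℝ) (_ : 0 < ε), gaugePre F d ε A := by
  simp only [gaugeMeasure, OuterMeasure.iSup_apply]

lemma tendsto_gaugePre (F : Set (Set X × ℝ)) (d : ℝ) (A : Set X) :
    Tendsto (fun ε => gaugePre F d ε A) (𝓝[>] 0) (𝓝 (gaugeMeasure F d A)) := by
  rw [← map_coe_Ioi_atBot, tendsto_map'_iff, gaugeMeasure_apply, iSup_subtype']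
  exact tendsto_atBot_iSup fun _ _ h => gaugePre_anti F d h A

lemma exists_cover_of_gaugePre_lt (hd : 0 < d) (hF : ∀ η > 0, ∃ e ∈ F, e.2 < η) (hε : 0 < ε)
    {A : Set X} {b : ℝ≥0∞} (h : gaugePre F d ε A < b) :
    ∃ c : ℕ → Set X × ℝ, A ⊆ ⋃ m, (c m).1 ∧ (∀ m, c m ∈ F ∧ (c m).2 < ε) ∧
      ∑' m, ENNReal.ofReal (c m).2 ^ d < b := by
  simp only [gaugePre, OuterMeasure.boundedBy_apply, iInf_lt_iff] at h
  obtain ⟨t, hAt, ht⟩ := h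
  obtain ⟨η, hη, hηb⟩ := ENNReal.lt_iff_exists_add_pos_lt.1 ht
  obtain ⟨η', hη', hsum⟩ :=
    ENNReal.exists_pos_sum_of_countable (ENNReal.coe_pos.2 hη).ne' ℕ
  set a : ℕ → ℝ≥0∞ := fun m => ⨆ _ : (t m).Nonempty,
    ⨅ (δ : ℝ) (_ : (t m, δ) ∈ F ∧ δ < ε), ENNReal.ofReal δ ^ d
  have hc : ∀ m, ∃ e : Set X × ℝ, t m ⊆ e.1 ∧ (e ∈ F ∧ e.2 < ε) ∧
      ENNReal.ofReal e.2 ^ d < a m + η' m := by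
    intro m
    rcases (t m).eq_empty_or_nonempty with hempty | hne
    · have hlim : Tendsto (fun r : ℝ => ENNReal.ofReal r ^ d) (𝓝 0) (𝓝 0) :=
        (ENNReal.continuous_rpow_const.comp ENNReal.continuous_ofReal).tendsto' 0 0 (by simp [hd])
      obtain ⟨r, hr, hrε⟩ := ((hlim.eventually_lt_const (ENNReal.coe_pos.2 (hη' m))).and
        (gt_mem_nhds hε)).exists_gt
      obtain ⟨e, heF, her⟩ := hF r hr
      refine ⟨e, hempty.trans_subset (empty_subset _), ⟨heF, her.trans hrε.2⟩, ?_⟩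
      calc ENNReal.ofReal e.2 ^ d ≤ ENNReal.ofReal r ^ d := by gcongr
        _ < η' m := hrε.1
        _ ≤ a m + η' m := le_add_self
    · have hlt : a m < a m + η' m :=
        ENNReal.lt_add_right (ne_top_of_le_ne_top (ne_top_of_lt ht) (ENNReal.le_tsum m))
          (ENNReal.coe_pos.2 (hη' m)).ne'
      nth_rewrite 1 [show a m = _ from iSup_pos hne] at hlt
      simp only [iInf_lt_iff] at hlt
      obtain ⟨δ, hδ, hδa⟩ := hlt
      exact ⟨(t m, δ), Subset.rfl, hδ, hδa⟩
  choose c htc hcF hca using hc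
  refine ⟨c, hAt.trans (iUnion_mono htc), hcF, lt_of_le_of_lt ?_ hηb⟩
  calc ∑' m, ENNReal.ofReal (c m).2 ^ d ≤ ∑' m, (a m + η' m) :=
        ENNReal.tsum_le_tsum fun m => (hca m).le
    _ = ∑' m, a m + ∑' m, (η' m : ℝ≥0∞) := ENNReal.tsum_add
    _ ≤ ∑' m, a m + η := by gcongr

lemma gaugePre_le_tsum {ι : Type*} [Countable ι] {A : Set X} (c : ι → Set X × ℝ)
    (hA : A ⊆ ⋃ m, (c m).1) (hc : ∀ m, c m ∈ F ∧ (c m).2 < ε) :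
    gaugePre F d ε A ≤ ∑' m, ENNReal.ofReal (c m).2 ^ d :=
  calc gaugePre F d ε A ≤ gaugePre F d ε (⋃ m, (c m).1) := measure_mono hA
    _ ≤ ∑' m, gaugePre F d ε (c m).1 := measure_iUnion_le _
    _ ≤ ∑' m, ENNReal.ofReal (c m).2 ^ d :=
      ENNReal.tsum_le_tsum fun m => gaugePre_le (hc m).1 (hc m).2

lemma gaugeMeasure_image_le (ψ : X → X) (h : ∀ e ∈ F, (ψ '' e.1, e.2) ∈ F) (A : Set X) :
    gaugeMeasure F d (ψ '' A) ≤ gaugeMeasure F d A := by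
  rw [gaugeMeasure_apply, gaugeMeasure_apply]
  refine iSup₂_mono fun ε _ => ?_
  have hle : OuterMeasure.comap ψ (gaugePre F d ε) ≤ gaugePre F d ε :=
    le_gaugePre_iff.2 fun e he hε => gaugePre_le (h e he) hε
  exact hle A

lemma gaugeMeasure_le_mul_of_forall_exists {F' : Set (Set X × ℝ)} {k : ℝ} (hd : 0 ≤ d)
    (hk : 0 < k) (h : ∀ e ∈ F, ∃ e' ∈ F', e.1 ⊆ e'.1 ∧ e'.2 = k * e.2) (A : Set X) :
    gaugeMeasure F' d A ≤ ENNReal.ofReal k ^ d * gaugeMeasure F d A := by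
  have hk0 : ENNReal.ofReal k ^ d ≠ 0 :=
    (ENNReal.rpow_pos (ENNReal.ofReal_pos.2 hk) ENNReal.ofReal_ne_top).ne'
  have hktop : ENNReal.ofReal k ^ d ≠ ⊤ := ENNReal.rpow_ne_top_of_nonneg hd ENNReal.ofReal_ne_top
  have hle : ∀ ε, (ENNReal.ofReal k ^ d)⁻¹ • gaugePre F' d ε ≤ gaugePre F d (ε / k) := by
    refine fun ε => le_gaugePre_iff.2 fun e he hε => ?_
    obtain ⟨e', he', hsub, hsize⟩ := h e he
    rw [smul_apply, smul_eq_mul, ENNReal.inv_mul_le_iff hk0 hktop,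
      ← ENNReal.mul_rpow_of_nonneg _ _ hd, ← ENNReal.ofReal_mul hk.le, ← hsize]
    refine (measure_mono hsub).trans (gaugePre_le he' ?_)
    rwa [hsize, ← lt_div_iff₀' hk]
  rw [gaugeMeasure_apply]
  refine iSup₂_le fun ε hε => ?_
  rw [← ENNReal.inv_mul_le_iff hk0 hktop]
  exact (hle ε A).trans (gaugePre_le_gaugeMeasure (div_pos hε hk) A)

lemma gaugeMeasure_union_of_separated {ρ : X → X → ℝ}
    (hF : ∀ e ∈ F, ∀ x ∈ e.1, ∀ y ∈ e.1, ρ x y ≤ e.2) {s t : Set X} {r : ℝ} (hr : 0 < r)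
    (hst : ∀ x ∈ s, ∀ y ∈ t, r ≤ ρ x y) :
    gaugeMeasure F d (s ∪ t) = gaugeMeasure F d s + gaugeMeasure F d t := by
  refine tendsto_nhds_unique_of_eventuallyEq (tendsto_gaugePre F d _)
    ((tendsto_gaugePre F d s).add (tendsto_gaugePre F d t)) ?_
  filter_upwards [Ioo_mem_nhdsGT hr] with ε hε
  refine OuterMeasure.boundedBy_union_of_top_of_nonempty_inter ?_
  rintro u ⟨x, hxs, hxu⟩ ⟨y, hyt, hyu⟩
  refine iInf₂_eq_top.2 fun δ hδ => absurd hδ.2 (not_lt.2 ?_)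
  linarith [hst x hxs y hyt, hF _ hδ.1 x hxu y hyu, hε.2]

end GaugeMeasure

section Caratheodory

open Set Filter Topology MeasureTheory

variable {X : Type*} [TopologicalSpace X] {ρ : X → X → ℝ} {F : Set (Set X × ℝ)} {d ε : ℝ}

/-- `ρ` is a distance inducing the given topology. The distance is an explicit function, as in
`sphMeasFun`, since `Heis n` already carries the metric of a product space. -/
structure IsCompatibleDist (ρ : X → X → ℝ) : Prop where
  self : ∀ x, ρ x x = 0
  eq_of_zero : ∀ {x y}, ρ x y = 0 → x = y
  symm : ∀ x y, ρ x y = ρ y x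
  triangle : ∀ x y z, ρ x z ≤ ρ x y + ρ y z
  isOpen_iff : ∀ s : Set X, IsOpen s ↔ ∀ x ∈ s, ∃ ε > 0, ∀ y, ρ x y < ε → y ∈ s

/-- The closure properties of a gauge `F` for the distance `ρ` that the density theorems need:
they hold both for balls and for arbitrary sets of bounded diameter. -/
structure IsGauge (ρ : X → X → ℝ) (F : Set (Set X × ℝ)) : Prop where
  pos : ∀ e ∈ F, 0 < e.2
  dist_le : ∀ e ∈ F, ∀ x ∈ e.1, ∀ y ∈ e.1, ρ x y ≤ e.2
  ball_mem : ∀ x r, 0 < r → ({y | ρ x y ≤ r}, 2 * r) ∈ F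
  exists_enlargement : ∀ e ∈ F, ∀ s, 0 < s → ∃ G, (G, e.2 + 2 * s) ∈ F ∧
    ∀ x ∈ e.1, ∀ y, ρ x y ≤ s → y ∈ G
  exists_closed : ∀ e ∈ F, ∃ G, e.1 ⊆ G ∧ IsClosed G ∧ (G, e.2) ∈ F

lemma IsCompatibleDist.isClosed_ball (hρ : IsCompatibleDist ρ) (x : X) (r : ℝ) :
    IsClosed {y | ρ x y ≤ r} := by
  rw [← isOpen_compl_iff, hρ.isOpen_iff]
  intro y hy
  rw [mem_compl_iff, mem_ofPred_eq, not_le] at hy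
  refine ⟨ρ x y - r, by linarith, fun z hz => ?_⟩
  rw [mem_compl_iff, mem_ofPred_eq, not_le]
  linarith [hρ.triangle x z y, hρ.symm z y]

lemma gaugeMeasure_isCaratheodory [MeasurableSpace X] [BorelSpace X] (hρ : IsCompatibleDist ρ)
    (hF : IsGauge ρ F) {B : Set X} (hB : MeasurableSet B) :
    (gaugeMeasure F d).IsCaratheodory B := by
  let _ : MetricSpace X :=
    { PseudoMetricSpace.ofDistTopology ρ hρ.self hρ.symm hρ.triangle hρ.isOpen_iff with
      eq_of_dist_eq_zero := hρ.eq_of_zero }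
  have hmetric : (gaugeMeasure F d).IsMetric := by
    rintro s t ⟨r, hr0, hr⟩
    obtain ⟨δ, hδ0, hδr⟩ := ENNReal.lt_iff_exists_nnreal_btwn.1 (pos_iff_ne_zero.2 hr0)
    refine gaugeMeasure_union_of_separated hF.dist_le (r := δ) (by simpa using hδ0) ?_
    intro x hx y hy
    have := hδr.le.trans (hr x hx y hy)
    rwa [edist_dist, ENNReal.le_ofReal_iff_toReal_le ENNReal.coe_ne_top dist_nonneg] at this
  exact hmetric.borel_le_caratheodory B (BorelSpace.measurable_eq (α := X) ▸ hB)

lemma tsum_gaugeMeasure_inter_le [MeasurableSpace X] [BorelSpace X] (hρ : IsCompatibleDist ρ)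
    (hF : IsGauge ρ F) {B : ℕ → Set X} (hB : ∀ i, MeasurableSet (B i))
    (hdisj : Pairwise (Function.onFun Disjoint B)) (A : Set X) :
    ∑' i, gaugeMeasure F d (A ∩ B i) ≤ gaugeMeasure F d A :=
  ENNReal.tsum_le_of_sum_range_le fun _ =>
    ((gaugeMeasure F d).isCaratheodory_sum
      (fun i => gaugeMeasure_isCaratheodory hρ hF (hB i)) hdisj).le.trans
      (measure_mono inter_subset_left)

end Caratheodory

section Density

open Set Filter Topology MeasureTheory

variable {X : Type*} {ρ : X → X → ℝ} {F : Set (Set X × ℝ)} {d ε : ℝ} {A : Set X} {k : ℝ≥0∞}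

lemma measure_le_mul_gaugePre [MeasurableSpace X] {μ : Measure X} (hk0 : k ≠ 0) (hk : k ≠ ⊤)
    (h : ∀ x ∈ A, ∀ e ∈ F, x ∈ e.1 → e.2 < ε → μ e.1 ≤ k * ENNReal.ofReal e.2 ^ d) :
    μ A ≤ k * gaugePre F d ε A := by
  have hle : k⁻¹ • OuterMeasure.restrict A μ.toOuterMeasure ≤ gaugePre F d ε := by
    refine le_gaugePre_iff.2 fun e he hε => ?_
    rw [smul_apply, smul_eq_mul, ENNReal.inv_mul_le_iff hk0 hk, OuterMeasure.restrict_apply,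
      Measure.coe_toOuterMeasure]
    rcases (e.1 ∩ A).eq_empty_or_nonempty with hempty | ⟨x, hxe, hxA⟩
    · simp [hempty]
    · exact (measure_mono inter_subset_left).trans (h x hxA e he hxe hε)
  have hA := hle A
  rwa [smul_apply, smul_eq_mul, ENNReal.inv_mul_le_iff hk0 hk, OuterMeasure.restrict_apply,
    inter_self] at hA

lemma measure_le_mul_gaugeMeasure [MeasurableSpace X] {μ : Measure X} (hk0 : k ≠ 0) (hk : k ≠ ⊤)
    (h : ∀ x ∈ A, ∃ ε > 0, ∀ e ∈ F, x ∈ e.1 → e.2 < ε → μ e.1 ≤ k * ENNReal.ofReal e.2 ^ d) :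
    μ A ≤ k * gaugeMeasure F d A := by
  let B : ℕ → Set X := fun j => {x ∈ A | ∀ e ∈ F, x ∈ e.1 → e.2 < 1 / ((j : ℝ) + 1) →
    μ e.1 ≤ k * ENNReal.ofReal e.2 ^ d}
  have hAB : A ⊆ ⋃ j, B j := fun x hx => by
    obtain ⟨ε, hε, h'⟩ := h x hx
    obtain ⟨j, hj⟩ := exists_nat_one_div_lt hε
    exact mem_iUnion.2 ⟨j, hx, fun e he hxe hes => h' e he hxe (hes.trans hj)⟩
  have hmono : Monotone B := fun i j hij x hx =>
    ⟨hx.1, fun e he hxe hes => hx.2 e he hxe (hes.trans_le (Nat.one_div_le_one_div hij))⟩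
  refine (measure_mono hAB).trans ?_
  rw [hmono.measure_iUnion]
  refine iSup_le fun j => ?_
  calc μ (B j) ≤ k * gaugePre F d (1 / ((j : ℝ) + 1)) (B j) :=
        measure_le_mul_gaugePre hk0 hk fun x hx => hx.2
    _ ≤ k * gaugeMeasure F d A := by
        gcongr
        · exact gaugePre_le_gaugeMeasure Nat.one_div_pos_of_nat
        · exact fun x hx => hx.1

variable [TopologicalSpace X]

lemma exists_disjoint_vitali_subfamily {t : Set (Set X × ℝ)} {R : ℝ}
    (ht0 : ∀ a ∈ t, 0 ≤ a.2) (htR : ∀ a ∈ t, a.2 ≤ R) (htdist : ∀ a ∈ t, ∀ x ∈ a.1, ∀ y ∈ a.1,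
      ρ x y ≤ a.2) (hclosed : ∀ a ∈ t, IsClosed a.1) (hne : ∀ a ∈ t, a.1.Nonempty)
    (hfine : ∀ x ∈ A, ∀ O, IsOpen O → x ∈ O → ∃ a ∈ t, x ∈ a.1 ∧ a.1 ⊆ O) :
    ∃ u ⊆ t, u.PairwiseDisjoint Prod.fst ∧ ∀ s : Finset u, ∀ x ∈ A,
      (∃ e ∈ s, x ∈ e.1.1) ∨ ∃ b : u, b ∉ s ∧ ∃ y ∈ b.1.1, ρ y x ≤ 2 * b.1.2 := by
  obtain ⟨u, hut, hdisj, hcov⟩ := Vitali.exists_disjoint_subfamily_covering_enlargement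
    Prod.fst t Prod.snd 2 one_lt_two ht0 R htR hne
  refine ⟨u, hut, hdisj, fun s x hx => or_iff_not_imp_left.2 fun hxs => ?_⟩
  have hs : IsClosed (⋃ e ∈ s, e.1.1) :=
    s.finite_toSet.isClosed_biUnion fun e _ => hclosed _ (hut e.2)
  obtain ⟨a, hat, hxa, has⟩ := hfine x hx _ hs.isOpen_compl (by simpa using hxs)
  obtain ⟨b, hbu, ⟨y, hya, hyb⟩, hab⟩ := hcov a hat
  refine ⟨⟨b, hbu⟩, fun hbs => has hya ?_, y, hyb, (htdist a hat y hya x hxa).trans hab⟩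
  exact mem_biUnion (x := (⟨b, hbu⟩ : u)) hbs hyb

lemma IsGauge.countable_of_tsum_ne_top (hF : IsGauge ρ F) {u : Set (Set X × ℝ)} (hu : u ⊆ F)
    (hsum : ∑' e : u, ENNReal.ofReal e.1.2 ^ d ≠ ⊤) : Countable u := by
  have hsupp : Function.support (fun e : u => ENNReal.ofReal e.1.2 ^ d) = univ :=
    eq_univ_of_forall fun e => (ENNReal.rpow_pos
      (ENNReal.ofReal_pos.2 (hF.pos _ (hu e.2))) ENNReal.ofReal_ne_top).ne'
  exact countable_univ_iff.1 (hsupp ▸ Summable.countable_support_ennreal hsum)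

lemma IsGauge.gaugePre_le_sum_add_tsum (hF : IsGauge ρ F) (hd : 0 ≤ d) {u : Set (Set X × ℝ)}
    [Countable u] (hu : ∀ e ∈ u, e ∈ F ∧ 5 * e.2 < ε) (s : Finset u)
    (hcov : ∀ x ∈ A, (∃ e ∈ s, x ∈ e.1.1) ∨ ∃ b : u, b ∉ s ∧ ∃ y ∈ b.1.1, ρ y x ≤ 2 * b.1.2) :
    gaugePre F d ε A ≤ ∑ e ∈ s, ENNReal.ofReal e.1.2 ^ d +
      ENNReal.ofReal 5 ^ d * ∑' b : {b // b ∉ s}, ENNReal.ofReal b.1.1.2 ^ d := by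
  have hpos : ∀ e : u, 0 < e.1.2 := fun e => hF.pos _ (hu _ e.2).1
  choose G hGF hG using fun e : u => hF.exists_enlargement e.1 (hu _ e.2).1 (2 * e.1.2)
    (mul_pos two_pos (hpos e))
  have hG5 : ∀ e : u, gaugePre F d ε (G e) ≤ ENNReal.ofReal 5 ^ d * ENNReal.ofReal e.1.2 ^ d := by
    intro e
    rw [← ENNReal.mul_rpow_of_nonneg _ _ hd, ← ENNReal.ofReal_mul (by norm_num),
      show 5 * e.1.2 = e.1.2 + 2 * (2 * e.1.2) by ring]
    exact gaugePre_le (hGF e) (by linarith [(hu _ e.2).2])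
  have hsub : A ⊆ (⋃ e ∈ s, e.1.1) ∪ ⋃ b : {b // b ∉ s}, G b := by
    intro x hx
    rcases hcov x hx with ⟨e, hes, hxe⟩ | ⟨b, hbs, y, hyb, hyx⟩
    · exact Or.inl (mem_biUnion hes hxe)
    · exact Or.inr (mem_iUnion.2 ⟨⟨b, hbs⟩, hG b y hyb x hyx⟩)
  calc gaugePre F d ε A
      ≤ gaugePre F d ε (⋃ e ∈ s, e.1.1) + gaugePre F d ε (⋃ b : {b // b ∉ s}, G b) :=
        (measure_mono hsub).trans (measure_union_le _ _)
    _ ≤ ∑ e ∈ s, gaugePre F d ε e.1.1 + ∑' b : {b // b ∉ s}, gaugePre F d ε (G b) :=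
        add_le_add (measure_biUnion_finset_le _ _) (measure_iUnion_le _)
    _ ≤ _ := by
        rw [← ENNReal.tsum_mul_left]
        refine add_le_add (Finset.sum_le_sum fun e _ => ?_) (ENNReal.tsum_le_tsum fun b => hG5 b)
        exact gaugePre_le (hu _ e.2).1 (by linarith [(hu _ e.2).2, hpos e])

lemma IsGauge.gaugePre_le_tsum_of_vitali (hF : IsGauge ρ F) (hd : 0 ≤ d) {u : Set (Set X × ℝ)}
    (hu : ∀ e ∈ u, e ∈ F ∧ 5 * e.2 < ε) (hcov : ∀ s : Finset u, ∀ x ∈ A,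
      (∃ e ∈ s, x ∈ e.1.1) ∨ ∃ b : u, b ∉ s ∧ ∃ y ∈ b.1.1, ρ y x ≤ 2 * b.1.2) :
    gaugePre F d ε A ≤ ∑' e : u, ENNReal.ofReal e.1.2 ^ d := by
  rcases eq_or_ne (∑' e : u, ENNReal.ofReal e.1.2 ^ d) ⊤ with htop | hfin
  · exact htop ▸ le_top
  have := hF.countable_of_tsum_ne_top (fun e he => (hu e he).1) hfin
  have hlim : Tendsto (fun s : Finset u => ∑' e : u, ENNReal.ofReal e.1.2 ^ d +
      ENNReal.ofReal 5 ^ d * ∑' b : {b // b ∉ s}, ENNReal.ofReal b.1.1.2 ^ d) atTop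
      (𝓝 (∑' e : u, ENNReal.ofReal e.1.2 ^ d + ENNReal.ofReal 5 ^ d * 0)) :=
    tendsto_const_nhds.add (ENNReal.Tendsto.const_mul
      (ENNReal.tendsto_tsum_compl_atTop_zero hfin)
      (Or.inr (ENNReal.rpow_ne_top_of_nonneg hd ENNReal.ofReal_ne_top)))
  rw [mul_zero, add_zero] at hlim
  refine ge_of_tendsto' hlim fun s => ?_
  exact (hF.gaugePre_le_sum_add_tsum hd hu s (hcov s)).trans
    (add_le_add_left (ENNReal.sum_le_tsum s) _)

lemma IsGauge.mul_gaugePre_le_measure_of_isOpen [MeasurableSpace X] [BorelSpace X]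
    (hρ : IsCompatibleDist ρ) (hF : IsGauge ρ F) (hd : 0 ≤ d) {μ : Measure X} {V : Set X}
    (hV : IsOpen V) (hAV : A ⊆ V) (hε : 0 < ε)
    (h : ∀ x ∈ A, ∀ ε > 0, ∃ e ∈ F, x ∈ e.1 ∧ e.2 < ε ∧ k * ENNReal.ofReal e.2 ^ d ≤ μ e.1) :
    k * gaugePre F d ε A ≤ μ V := by
  let t : Set (Set X × ℝ) := {e | (e ∈ F ∧ 5 * e.2 < ε) ∧ IsClosed e.1 ∧ e.1.Nonempty ∧
    e.1 ⊆ V ∧ k * ENNReal.ofReal e.2 ^ d ≤ μ e.1}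
  have hfine : ∀ x ∈ A, ∀ O, IsOpen O → x ∈ O → ∃ e ∈ t, x ∈ e.1 ∧ e.1 ⊆ O := by
    intro x hx O hO hxO
    obtain ⟨r, hr, hrO⟩ := (hρ.isOpen_iff (O ∩ V)).1 (hO.inter hV) x ⟨hxO, hAV hx⟩
    obtain ⟨e, he, hxe, hes, hμ⟩ := h x hx (min r (ε / 5)) (by positivity)
    obtain ⟨G, heG, hGclosed, hGF⟩ := hF.exists_closed e he
    have hGO : G ⊆ O ∩ V := fun y hy => hrO y
      ((hF.dist_le _ hGF x (heG hxe) y hy).trans_lt (hes.trans_le (min_le_left _ _)))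
    have h5 : 5 * e.2 < ε := by linarith [hes.trans_le (min_le_right _ _)]
    exact ⟨(G, e.2), ⟨⟨hGF, h5⟩, hGclosed, ⟨x, heG hxe⟩, hGO.trans inter_subset_right,
      hμ.trans (measure_mono heG)⟩, heG hxe, hGO.trans inter_subset_left⟩
  obtain ⟨u, hut, hdisj, hcov⟩ := exists_disjoint_vitali_subfamily (ρ := ρ) (R := ε)
    (fun a ha => (hF.pos a ha.1.1).le) (fun a ha => by linarith [hF.pos a ha.1.1, ha.1.2])
    (fun a ha => hF.dist_le a ha.1.1) (fun a ha => ha.2.1) (fun a ha => ha.2.2.1) hfine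
  calc k * gaugePre F d ε A ≤ k * ∑' e : u, ENNReal.ofReal e.1.2 ^ d :=
        mul_le_mul_right (hF.gaugePre_le_tsum_of_vitali hd (fun e he => (hut he).1) hcov) k
    _ = ∑' e : u, k * ENNReal.ofReal e.1.2 ^ d := ENNReal.tsum_mul_left.symm
    _ ≤ ∑' e : u, μ e.1.1 := ENNReal.tsum_le_tsum fun e => (hut e.2).2.2.2.2
    _ ≤ μ (⋃ e : u, e.1.1) := tsum_meas_le_meas_iUnion_of_disjoint μ
        (fun e => (hut e.2).2.1.measurableSet)
        (fun a b hab => hdisj a.2 b.2 (Subtype.coe_injective.ne hab))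
    _ ≤ μ V := measure_mono (iUnion_subset fun e => (hut e.2).2.2.2.1)

lemma IsGauge.mul_gaugeMeasure_le_measure [MeasurableSpace X] [BorelSpace X]
    (hρ : IsCompatibleDist ρ) (hF : IsGauge ρ F) (hd : 0 ≤ d) {μ : Measure X} [μ.OuterRegular]
    (h : ∀ x ∈ A, ∀ ε > 0, ∃ e ∈ F, x ∈ e.1 ∧ e.2 < ε ∧ k * ENNReal.ofReal e.2 ^ d ≤ μ e.1) :
    k * gaugeMeasure F d A ≤ μ A := by
  rw [A.measure_eq_iInf_isOpen μ, gaugeMeasure_apply]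
  simp only [ENNReal.mul_iSup]
  exact iSup₂_le fun ε hε => le_iInf₂ fun V hAV => le_iInf fun hV =>
    hF.mul_gaugePre_le_measure_of_isOpen hρ hd hV hAV hε h

end Density

section BallDiamGauge

open Set Filter Topology MeasureTheory

variable {X : Type*} {ρ : X → X → ℝ} {d ε : ℝ}

/-- The gauge of closed balls, each of size twice its radius, which generates the spherical
measure. -/
def ballGauge (ρ : X → X → ℝ) : Set (Set X × ℝ) :=
  {e | ∃ x r, 0 < r ∧ e = ({y | ρ x y ≤ r}, 2 * r)}

/-- The gauge of all sets, each with every positive bound on its diameter as a size, which generates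
the Hausdorff measure. Allowing bounds instead of the diameter itself keeps sizes positive. -/
def diamGauge (ρ : X → X → ℝ) : Set (Set X × ℝ) :=
  {e | 0 < e.2 ∧ ∀ x ∈ e.1, ∀ y ∈ e.1, ρ x y ≤ e.2}

lemma IsCompatibleDist.isGauge_ballGauge [TopologicalSpace X] (hρ : IsCompatibleDist ρ) :
    IsGauge ρ (ballGauge ρ) where
  pos := by
    rintro _ ⟨x, r, hr, rfl⟩
    exact mul_pos two_pos hr
  dist_le := by
    rintro _ ⟨x, r, -, rfl⟩ y (hy : ρ x y ≤ r) z (hz : ρ x z ≤ r)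
    linarith [hρ.triangle y x z, hρ.symm y x]
  ball_mem x r hr := ⟨x, r, hr, rfl⟩
  exists_enlargement := by
    rintro _ ⟨x, r, hr, rfl⟩ s hs
    refine ⟨{y | ρ x y ≤ r + s}, ⟨x, r + s, by linarith, by ring_nf⟩, ?_⟩
    intro y (hy : ρ x y ≤ r) z hz
    rw [mem_ofPred_eq]
    linarith [hρ.triangle x y z]
  exists_closed := by
    rintro _ ⟨x, r, hr, rfl⟩
    exact ⟨_, Subset.rfl, hρ.isClosed_ball x r, x, r, hr, rfl⟩

lemma IsCompatibleDist.isGauge_diamGauge [TopologicalSpace X] (hρ : IsCompatibleDist ρ) :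
    IsGauge ρ (diamGauge ρ) where
  pos _ he := he.1
  dist_le _ he := he.2
  ball_mem x r hr := by
    refine ⟨mul_pos two_pos hr, ?_⟩
    intro y (hy : ρ x y ≤ r) z (hz : ρ x z ≤ r)
    linarith [hρ.triangle y x z, hρ.symm y x]
  exists_enlargement := by
    rintro ⟨E, δ⟩ ⟨hδ : 0 < δ, hE : ∀ x ∈ E, ∀ y ∈ E, ρ x y ≤ δ⟩ s hs
    refine ⟨{y | ∃ x ∈ E, ρ x y ≤ s}, ⟨by positivity, ?_⟩, fun x hx y hxy => ⟨x, hx, hxy⟩⟩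
    rintro y ⟨x, hx, hxy⟩ z ⟨x', hx', hxz⟩
    linarith [hρ.triangle y x z, hρ.triangle x x' z, hE x hx x' hx', hρ.symm y x]
  exists_closed := by
    rintro ⟨E, δ⟩ ⟨hδ, hE⟩
    have hclosure : ∀ x ∈ E, ∀ y ∈ closure E, ρ x y ≤ δ := fun x hx =>
      closure_minimal (hE x hx) (hρ.isClosed_ball x δ)
    refine ⟨closure E, subset_closure, isClosed_closure, hδ, fun x hx y hy => ?_⟩
    exact closure_minimal (fun z hz => (hρ.symm x z).le.trans (hclosure z hz x hx))
      (hρ.isClosed_ball x δ) hy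

lemma diamFun_le_iff {s : Set X} {a : ℝ≥0∞} :
    diamFun ρ s ≤ a ↔ ∀ x ∈ s, ∀ y ∈ s, ENNReal.ofReal (ρ x y) ≤ a := by
  simp only [diamFun, iSup_le_iff]

lemma diamFun_le_of_mem_diamGauge {e : Set X × ℝ} (he : e ∈ diamGauge ρ) :
    diamFun ρ e.1 ≤ ENNReal.ofReal e.2 :=
  diamFun_le_iff.2 fun x hx y hy => ENNReal.ofReal_le_ofReal (he.2 x hx y hy)

lemma gaugePre_diamGauge_le {s : Set X} (hs : diamFun ρ s < ENNReal.ofReal ε) :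
    gaugePre (diamGauge ρ) d ε s ≤ diamFun ρ s ^ d := by
  have hdiam : ENNReal.ofReal (diamFun ρ s).toReal = diamFun ρ s := ENNReal.ofReal_toReal hs.ne_top
  have hlim : Tendsto (fun δ : ℝ => ENNReal.ofReal δ ^ d) (𝓝[>] (diamFun ρ s).toReal)
      (𝓝 (diamFun ρ s ^ d)) := by
    have hcont := (ENNReal.continuous_rpow_const (y := d)).comp ENNReal.continuous_ofReal
    simpa only [Function.comp_def, hdiam] using
      (hcont.tendsto (diamFun ρ s).toReal).mono_left nhdsWithin_le_nhds
  refine ge_of_tendsto hlim ?_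
  filter_upwards [Ioo_mem_nhdsGT ((ENNReal.lt_ofReal_iff_toReal_lt hs.ne_top).1 hs)] with δ hδ
  have hδ0 : 0 < δ := ENNReal.toReal_nonneg.trans_lt hδ.1
  refine gaugePre_le (e := (s, δ)) ⟨hδ0, fun x hx y hy => ?_⟩ hδ.2
  rw [← ENNReal.ofReal_le_ofReal_iff hδ0.le]
  exact (diamFun_le_iff.1 hdiam.ge x hx y hy).trans (ENNReal.ofReal_le_ofReal hδ.1.le)

lemma sphMeasFun_eq_gaugeMeasure [Nonempty X] (hd : 0 < d) (A : Set X) :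
    sphMeasFun ρ d A = gaugeMeasure (ballGauge ρ) d A := by
  have hsmall : ∀ η > 0, ∃ e ∈ ballGauge ρ, e.2 < η := fun η hη =>
    ⟨_, ⟨Classical.arbitrary X, η / 3, by positivity, rfl⟩, by simp only; linarith⟩
  rw [gaugeMeasure_apply]
  refine iSup_congr fun ε => iSup_congr fun hε => le_antisymm (le_of_forall_gt fun b hb => ?_) ?_
  · obtain ⟨e, hAe, he, hsum⟩ := exists_cover_of_gaugePre_lt hd hsmall hε hb
    choose c r hr hcr using fun m => (he m).1
    simp only [hcr] at hAe he hsum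
    simp only [iInf_lt_iff]
    exact ⟨c, r, hAe, fun m => ⟨hr m, (he m).2⟩, hsum⟩
  · exact le_iInf₂ fun c r => le_iInf₂ fun hA hr =>
      gaugePre_le_tsum (fun m => ({x | ρ (c m) x ≤ r m}, 2 * r m)) hA
        fun m => ⟨⟨c m, r m, (hr m).1, rfl⟩, (hr m).2⟩

lemma hausMeasFun_eq_gaugeMeasure (hd : 0 < d) (A : Set X) :
    hausMeasFun ρ d A = gaugeMeasure (diamGauge ρ) d A := by
  have hsmall : ∀ η > 0, ∃ e ∈ diamGauge ρ, e.2 < η := fun η hη =>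
    ⟨(∅, η / 2), ⟨half_pos hη, by simp⟩, half_lt_self hη⟩
  rw [gaugeMeasure_apply]
  refine le_antisymm (iSup₂_le fun ε hε => ?_) (iSup₂_le fun ε hε => ?_)
  · obtain ⟨ε', hε', hεε⟩ := ENNReal.lt_iff_exists_nnreal_btwn.1 hε
    refine le_trans (le_of_forall_gt fun b hb => ?_) (le_iSup₂ (ε' : ℝ) (by simpa using hε'))
    obtain ⟨e, hAe, he, hsum⟩ := exists_cover_of_gaugePre_lt hd hsmall (by simpa using hε') hb
    refine lt_of_le_of_lt (iInf_le_of_le (fun m => (e m).1) (iInf₂_le_of_le hAe (fun m => ?_)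
      (ENNReal.tsum_le_tsum fun m => ?_))) hsum
    · calc diamFun ρ (e m).1 ≤ ENNReal.ofReal (e m).2 := diamFun_le_of_mem_diamGauge (he m).1
        _ ≤ ENNReal.ofReal ε' := ENNReal.ofReal_le_ofReal (he m).2.le
        _ < ε := by rwa [ENNReal.ofReal_coe_nnreal]
    · exact ENNReal.rpow_le_rpow (diamFun_le_of_mem_diamGauge (he m).1) hd.le
  · refine le_iSup₂_of_le (ENNReal.ofReal ε) (ENNReal.ofReal_pos.2 hε)
      (le_iInf fun t => le_iInf₂ fun hA ht => ?_)
    calc gaugePre (diamGauge ρ) d ε A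
        ≤ ∑' m, gaugePre (diamGauge ρ) d ε (t m) :=
          (measure_mono hA).trans (measure_iUnion_le _)
      _ ≤ ∑' m, diamFun ρ (t m) ^ d :=
          ENNReal.tsum_le_tsum fun m => gaugePre_diamGauge_le (ht m)

end BallDiamGauge

section HeisenbergGroup

variable {n : ℕ}

lemma heisMul_assoc (p q r : Heis n) :
    heisMul (heisMul p q) r = heisMul p (heisMul q r) := by
  refine Prod.ext (add_assoc _ _ _) (Prod.ext (add_assoc _ _ _) ?_)
  have hcocycle : (∑ j, (p.1 j * q.2.1 j - q.1 j * p.2.1 j)) +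
      (∑ j, ((p.1 j + q.1 j) * r.2.1 j - r.1 j * (p.2.1 j + q.2.1 j))) =
      (∑ j, (q.1 j * r.2.1 j - r.1 j * q.2.1 j)) +
      ∑ j, (p.1 j * (q.2.1 j + r.2.1 j) - (q.1 j + r.1 j) * p.2.1 j) := by
    rw [← Finset.sum_add_distrib, ← Finset.sum_add_distrib]
    exact Finset.sum_congr rfl fun j _ => by ring
  simp only [heisMul, Pi.add_apply]
  linarith

lemma heisMul_zero (p : Heis n) : heisMul p 0 = p := by
  ext <;> simp [heisMul]

lemma zero_heisMul (p : Heis n) : heisMul 0 p = p := by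
  ext <;> simp [heisMul]

lemma heisInv_heisMul_self (p : Heis n) : heisMul (heisInv p) p = 0 := by
  ext <;> simp [heisMul, heisInv]

lemma heisMul_heisInv_self (p : Heis n) : heisMul p (heisInv p) = 0 := by
  ext <;> simp [heisMul, heisInv]

lemma heisInv_heisMul_cancel_left (p q : Heis n) : heisMul (heisInv p) (heisMul p q) = q := by
  rw [← heisMul_assoc, heisInv_heisMul_self, zero_heisMul]

lemma heisMul_heisInv_cancel_left (p q : Heis n) : heisMul p (heisMul (heisInv p) q) = q := by
  rw [← heisMul_assoc, heisMul_heisInv_self, zero_heisMul]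

lemma fst_heisMul_apply (i : Fin n) (p q : Heis n) : (heisMul p q).1 i = p.1 i + q.1 i := rfl

lemma heisMul_vertical (x y : Fin n → ℝ) (s t : ℝ) :
    heisMul (x, y, s) ((0, 0, t) : Heis n) = (x, y, s + t) := by
  simp [heisMul]

lemma continuous_heisMul : Continuous fun x : Heis n × Heis n => heisMul x.1 x.2 := by
  unfold heisMul
  fun_prop

lemma continuous_heisMul_left (p : Heis n) : Continuous (heisMul p) :=
  continuous_heisMul.comp (Continuous.prodMk_right p)

lemma continuous_heisDil (r : ℝ) : Continuous (heisDil r : Heis n → Heis n) := by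
  unfold heisDil
  fun_prop

lemma heisDil_zero (r : ℝ) : heisDil r (0 : Heis n) = 0 := by
  ext <;> simp [heisDil]

lemma heisDil_heisDil (r s : ℝ) (p : Heis n) :
    heisDil r (heisDil s p) = heisDil (r * s) p := by
  ext <;> simp only [heisDil, Pi.smul_apply, smul_eq_mul] <;> ring

lemma heisDil_one (p : Heis n) : heisDil 1 p = p := by
  ext <;> simp [heisDil]

/-- The one-parameter subgroup of `Heis n` in the horizontal direction `x i`. -/
noncomputable def horizLine (i : Fin n) (s : ℝ) : Heis n := (Pi.single i s, 0, 0)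

lemma fst_horizLine_self (i : Fin n) (s : ℝ) : (horizLine i s).1 i = s := by
  simp [horizLine]

lemma heisMul_horizLine (i : Fin n) (s : ℝ) (p : Heis n) :
    heisMul p (horizLine i s) = (p.1 + Pi.single i s, p.2.1, p.2.2 - s * p.2.1 i / 2) := by
  refine Prod.ext rfl (Prod.ext (add_zero _) ?_)
  simp only [heisMul, horizLine, add_zero, Pi.zero_apply, mul_zero, Pi.single_apply, ite_mul,
    zero_mul, zero_sub, Finset.sum_neg_distrib, Finset.sum_ite_eq', Finset.mem_univ, ↓reduceIte]
  ring

lemma horizLine_heisMul_horizLine (i : Fin n) (s t : ℝ) :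
    heisMul (horizLine i s) (horizLine i t) = horizLine i (s + t) := by
  rw [heisMul_horizLine]
  simp [horizLine, Pi.single_add]

lemma horizLine_zero (i : Fin n) : horizLine i 0 = 0 := by
  simp [horizLine]

lemma heisInv_horizLine (i : Fin n) (s : ℝ) : heisInv (horizLine i s) = horizLine i (-s) := by
  simp [horizLine, heisInv, Pi.single_neg]

lemma heisDil_horizLine (i : Fin n) (r s : ℝ) :
    heisDil r (horizLine i s) = horizLine i (r * s) := by
  ext <;> simp [horizLine, heisDil, Pi.single_apply]

/-- The projection of `Heis n` onto the vertical hyperplane `{p | p.1 i = 0}` along the left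
cosets of the one-parameter subgroup `horizLine i`. -/
noncomputable def vertProj (i : Fin n) (p : Heis n) : Heis n :=
  heisMul p (horizLine i (-p.1 i))

lemma vertProj_heisMul_horizLine (i : Fin n) (p : Heis n) (s : ℝ) :
    vertProj i (heisMul p (horizLine i s)) = vertProj i p := by
  rw [vertProj, vertProj, fst_heisMul_apply, heisMul_assoc, horizLine_heisMul_horizLine]
  congr 2
  simp [horizLine]

lemma vertProj_of_apply_eq_zero {i : Fin n} {p : Heis n} (hp : p.1 i = 0) : vertProj i p = p := by
  rw [vertProj, hp, neg_zero, horizLine_zero, heisMul_zero]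

lemma continuous_vertProj (i : Fin n) : Continuous (vertProj i) := by
  simp only [funext fun p : Heis n => show vertProj i p = _ from heisMul_horizLine i _ p]
  exact (continuous_fst.add ((continuous_single i).comp (by fun_prop))).prodMk (by fun_prop)

/-- The action of left translation by `p` on the left cosets of `horizLine i`, each coset being
represented by its point on the hyperplane `{p | p.1 i = 0}`. -/
noncomputable def vertShift (i : Fin n) (p g : Heis n) : Heis n :=
  heisMul (heisMul p g) (horizLine i (-p.1 i))

lemma vertProj_heisMul (i : Fin n) (p g : Heis n) :
    vertProj i (heisMul p g) = vertShift i p (vertProj i g) := by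
  simp only [vertShift, vertProj, heisMul_assoc, horizLine_heisMul_horizLine, fst_heisMul_apply]
  congr 3
  ring

end HeisenbergGroup

section HyperplaneMeasure

open Set Filter Topology MeasureTheory

variable {n : ℕ}

/-- The `j`-th factor of `vertMeasure i`: the Dirac mass at `0` when `j = i`, and Lebesgue measure
otherwise. -/
noncomputable def vertCoordMeasure (i j : Fin n) : Measure ℝ :=
  if j = i then Measure.dirac 0 else volume

instance (i j : Fin n) : SigmaFinite (vertCoordMeasure i j) := by
  unfold vertCoordMeasure
  split_ifs <;> infer_instance

/-- Lebesgue measure on the vertical hyperplane `{p | p.1 i = 0}`, seen as a measure on `Heis n`. -/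
noncomputable def vertMeasure (i : Fin n) : Measure (Heis n) :=
  (Measure.pi (vertCoordMeasure i)).prod
    ((volume : Measure (Fin n → ℝ)).prod (volume : Measure ℝ))

lemma measurePreserving_add_right_pi_vertCoordMeasure {i : Fin n} {a : Fin n → ℝ} (ha : a i = 0) :
    MeasurePreserving (fun x => x + a) (Measure.pi (vertCoordMeasure i))
      (Measure.pi (vertCoordMeasure i)) := by
  refine measurePreserving_pi (vertCoordMeasure i) (vertCoordMeasure i)
    (f := fun j x => x + a j) fun j => ?_
  unfold vertCoordMeasure
  split_ifs with hj
  · subst hj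
    simp only [ha, add_zero]
    exact MeasurePreserving.id _
  · exact measurePreserving_add_right volume (a j)

lemma measurePreserving_vertMeasure_shear {i : Fin n} {a : Fin n → ℝ} (ha : a i = 0)
    (b : Fin n → ℝ) {φ : (Fin n → ℝ) → (Fin n → ℝ) → ℝ} (hφ : Continuous (Function.uncurry φ)) :
    MeasurePreserving (fun p : Heis n => (p.1 + a, p.2.1 + b, p.2.2 + φ p.1 p.2.1))
      (vertMeasure i) (vertMeasure i) := by
  have hφ_comp {Y : Type} [TopologicalSpace Y] {u v : Y → Fin n → ℝ} (hu : Continuous u)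
      (hv : Continuous v) : Continuous fun z => φ (u z) (v z) := hφ.comp (hu.prodMk hv)
  refine (measurePreserving_add_right_pi_vertCoordMeasure ha).skew_product
    (g := fun x (q : (Fin n → ℝ) × ℝ) => (q.1 + b, q.2 + φ x q.1)) ?_ (.of_forall fun x => ?_)
  · refine Continuous.measurable (Continuous.prodMk (by fun_prop) (Continuous.add (by fun_prop) ?_))
    exact hφ_comp continuous_fst (by fun_prop)
  · refine ((measurePreserving_add_right volume b).skew_product (g := fun y t => t + φ x y) ?_
      (.of_forall fun y => (measurePreserving_add_right volume (φ x y)).map_eq)).map_eq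
    exact Continuous.measurable (continuous_snd.add (hφ_comp continuous_const continuous_fst))

lemma measurePreserving_vertShift (i : Fin n) (p : Heis n) :
    MeasurePreserving (vertShift i p) (vertMeasure i) (vertMeasure i) := by
  convert measurePreserving_vertMeasure_shear (i := i) (a := p.1 + Pi.single i (-p.1 i))
    (by simp) p.2.1
    (φ := fun x y =>
      p.2.2 + (∑ j, (p.1 j * y j - x j * p.2.1 j)) / 2 + p.1 i * (p.2.1 i + y i) / 2)
    (by unfold Function.uncurry; fun_prop) using 2 with g
  rw [vertShift, heisMul_horizLine]
  refine Prod.ext (by simp only [heisMul]; abel) (Prod.ext (add_comm _ _) ?_)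
  simp only [heisMul, Pi.add_apply]
  ring

/-- `vertShift i p` as a measurable equivalence, so that images can be measured. -/
noncomputable def vertShiftEquiv (i : Fin n) (p : Heis n) : Heis n ≃ᵐ Heis n where
  toFun := vertShift i p
  invFun g := heisMul (heisInv p) (heisMul g (horizLine i (p.1 i)))
  left_inv g := by
    dsimp only [vertShift]
    rw [heisMul_assoc _ (horizLine _ _), horizLine_heisMul_horizLine, neg_add_cancel,
      horizLine_zero, heisMul_zero, heisInv_heisMul_cancel_left]
  right_inv g := by
    rw [vertShift, heisMul_heisInv_cancel_left, heisMul_assoc, horizLine_heisMul_horizLine,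
      add_neg_cancel, horizLine_zero, heisMul_zero]
  measurable_toFun := (measurePreserving_vertShift i p).measurable
  measurable_invFun := ((continuous_heisMul_left _).comp
    (continuous_heisMul.comp (Continuous.prodMk_left _))).measurable

lemma vertMeasure_vertShift_image (i : Fin n) (p : Heis n) (A : Set (Heis n)) :
    vertMeasure i (vertShift i p '' A) = vertMeasure i A := by
  have hmp : MeasurePreserving (vertShiftEquiv i p) (vertMeasure i) (vertMeasure i) :=
    measurePreserving_vertShift i p
  rw [← hmp.measure_preimage_equiv (vertShift i p '' A)]
  exact congrArg _ (preimage_image_eq _ (vertShiftEquiv i p).injective)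

lemma vertMeasure_vertProj_heisMul_image (i : Fin n) (p : Heis n) (A : Set (Heis n)) :
    vertMeasure i (vertProj i '' (heisMul p '' A)) = vertMeasure i (vertProj i '' A) := by
  rw [← vertMeasure_vertShift_image i p (vertProj i '' A), image_image, image_image]
  exact congrArg _ (image_congr fun g _ => vertProj_heisMul i p g)

lemma vertMeasure_heisMul_image {i : Fin n} {p : Heis n} (hp : p.1 i = 0) (A : Set (Heis n)) :
    vertMeasure i (heisMul p '' A) = vertMeasure i A := by
  have hshift : vertShift i p = heisMul p := by
    funext g
    rw [vertShift, hp, neg_zero, horizLine_zero, heisMul_zero]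
  rw [← hshift, vertMeasure_vertShift_image]

lemma vertMeasure_inter_hyperplane (i : Fin n) (A : Set (Heis n)) :
    vertMeasure i (A ∩ {p | p.1 i = 0}) = vertMeasure i A := by
  refine measure_inter_conull ?_
  have hnull : Measure.pi (vertCoordMeasure i) (Function.eval i ⁻¹' {0}ᶜ) = 0 := by
    refine (Measure.quasiMeasurePreserving_eval (vertCoordMeasure i) i).preimage_null ?_
    simp [vertCoordMeasure]
  have hprod : {p : Heis n | p.1 i = 0}ᶜ = (Function.eval i ⁻¹' {0}ᶜ) ×ˢ univ := by
    ext p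
    simp
  rw [hprod, vertMeasure, Measure.prod_prod, hnull, zero_mul]

lemma map_mul_vertCoordMeasure (i j : Fin n) {r : ℝ} (hr : 0 < r) :
    (vertCoordMeasure i j).map (fun x => r * x) =
      (if j = i then 1 else ENNReal.ofReal r⁻¹) • vertCoordMeasure i j := by
  unfold vertCoordMeasure
  split_ifs
  · rw [Measure.map_dirac' (by fun_prop), mul_zero, one_smul]
  · simpa [abs_of_pos hr] using Measure.map_addHaar_smul (volume : Measure ℝ) hr.ne'

lemma map_smul_pi_vertCoordMeasure (i : Fin n) {r : ℝ} (hr : 0 < r) :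
    (Measure.pi (vertCoordMeasure i)).map (fun x => r • x) =
      ENNReal.ofReal (r⁻¹ ^ (n - 1)) • Measure.pi (vertCoordMeasure i) := by
  have hσ : ∀ j, SigmaFinite ((vertCoordMeasure i j).map fun x => r * x) := fun j =>
    (Homeomorph.mulLeft₀ r hr.ne').toMeasurableEquiv.sigmaFinite_map
  have hpi : (Measure.pi (vertCoordMeasure i)).map (fun x => r • x) =
      Measure.pi fun j => (vertCoordMeasure i j).map fun x => r * x :=
    Measure.pi_map_pi (hμ := hσ) (f := fun _ x => r * x) fun j => by fun_prop
  rw [hpi]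
  refine Measure.pi_eq fun s _ => ?_
  simp only [map_mul_vertCoordMeasure i _ hr, Measure.smul_apply, smul_eq_mul,
    Finset.prod_mul_distrib, Measure.pi_pi]
  congr 1
  rw [Finset.prod_ite, Finset.prod_const_one, one_mul, Finset.prod_const,
    ENNReal.ofReal_pow (by positivity), Finset.filter_ne',
    Finset.card_erase_of_mem (Finset.mem_univ _), Finset.card_fin]

lemma map_heisDil_vertMeasure (i : Fin n) {r : ℝ} (hr : 0 < r) :
    (vertMeasure i).map (heisDil r) = ENNReal.ofReal (r⁻¹ ^ (2 * n + 1)) • vertMeasure i := by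
  have hdil : (heisDil r : Heis n → Heis n) =
      Prod.map (fun x => r • x) (Prod.map (fun y => r • y) fun t => r ^ 2 • t) := rfl
  have hexp : n - 1 + (n + 2) = 2 * n + 1 := by
    have := i.2
    omega
  rw [hdil, vertMeasure, ← Measure.map_prod_map _ _ (by fun_prop) (by fun_prop),
    ← Measure.map_prod_map _ _ (by fun_prop) (by fun_prop),
    Measure.map_addHaar_smul (volume : Measure ℝ) (pow_pos hr 2).ne',
    Measure.map_addHaar_smul (volume : Measure (Fin n → ℝ)) hr.ne',
    map_smul_pi_vertCoordMeasure i hr]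
  simp only [Measure.prod_smul_right, Measure.prod_smul_left, smul_smul, Module.finrank_self,
    Module.finrank_fin_fun, pow_one, ← inv_pow, abs_of_pos (pow_pos (inv_pos.2 hr) _)]
  rw [← ENNReal.ofReal_mul (by positivity), ← ENNReal.ofReal_mul (by positivity)]
  congr 2
  rw [← hexp]
  ring

/-- A nontrivial dilation as a measurable equivalence, so that images can be measured. -/
noncomputable def heisDilEquiv {r : ℝ} (hr : r ≠ 0) : Heis n ≃ᵐ Heis n where
  toFun := heisDil r
  invFun := heisDil r⁻¹
  left_inv p := by rw [heisDil_heisDil, inv_mul_cancel₀ hr, heisDil_one]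
  right_inv p := by rw [heisDil_heisDil, mul_inv_cancel₀ hr, heisDil_one]
  measurable_toFun := (continuous_heisDil r).measurable
  measurable_invFun := (continuous_heisDil r⁻¹).measurable

lemma vertMeasure_heisDil_image (i : Fin n) {r : ℝ} (hr : 0 < r) (A : Set (Heis n)) :
    vertMeasure i (heisDil r '' A) = ENNReal.ofReal r ^ (2 * (n : ℝ) + 1) * vertMeasure i A := by
  have hA : vertMeasure i A = ENNReal.ofReal (r⁻¹ ^ (2 * n + 1)) *
      vertMeasure i (heisDil r '' A) := by
    rw [← smul_eq_mul, ← Measure.smul_apply, ← map_heisDil_vertMeasure i hr,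
      show heisDil r = heisDilEquiv (n := n) hr.ne' from rfl, MeasurableEquiv.map_apply,
      preimage_image_eq _ (MeasurableEquiv.injective _)]
  have hpow : ENNReal.ofReal r ^ (2 * (n : ℝ) + 1) = ENNReal.ofReal (r ^ (2 * n + 1)) := by
    rw [ENNReal.ofReal_pow hr.le, ← ENNReal.rpow_natCast]
    push_cast
    rfl
  rw [hA, hpow, ← mul_assoc, ← ENNReal.ofReal_mul (by positivity), ← mul_pow,
    mul_inv_cancel₀ hr.ne', one_pow, ENNReal.ofReal_one, one_mul]

lemma heis_ball_zero {r : ℝ} (hr : 0 < r) : Metric.ball (0 : Heis n) r =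
    (univ.pi fun _ => Metric.ball 0 r) ×ˢ (Metric.ball 0 r ×ˢ Metric.ball 0 r) := by
  rw [show (0 : Heis n) = (0, 0, 0) from rfl, ← ball_prod_same, ← ball_prod_same, ← ball_pi _ hr]
  rfl

lemma vertMeasure_ball_pos (i : Fin n) {r : ℝ} (hr : 0 < r) :
    0 < vertMeasure i (Metric.ball 0 r) := by
  rw [heis_ball_zero hr, vertMeasure, Measure.prod_prod, Measure.prod_prod, Measure.pi_pi]
  refine ENNReal.mul_pos (Finset.prod_ne_zero_iff.2 fun j _ => ?_) (ENNReal.mul_pos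
    (Metric.measure_ball_pos _ _ hr).ne' (Metric.measure_ball_pos _ _ hr).ne').ne'
  unfold vertCoordMeasure
  split_ifs
  · simp [hr]
  · exact (Metric.measure_ball_pos _ _ hr).ne'

lemma vertMeasure_ball_lt_top (i : Fin n) {r : ℝ} (hr : 0 < r) :
    vertMeasure i (Metric.ball 0 r) < ⊤ := by
  rw [heis_ball_zero hr, vertMeasure, Measure.prod_prod, Measure.prod_prod, Measure.pi_pi]
  refine ENNReal.mul_lt_top (ENNReal.prod_lt_top fun j _ => ?_)
    (ENNReal.mul_lt_top measure_ball_lt_top measure_ball_lt_top)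
  unfold vertCoordMeasure
  split_ifs
  · exact measure_lt_top _ _
  · exact measure_ball_lt_top

end HyperplaneMeasure

section HomogeneousDistance

open Set Filter Topology MeasureTheory

variable {n : ℕ}

/-- A left-invariant, one-homogeneous distance on `Heis n` whose value at `0` depends on the
horizontal coordinates only through their Euclidean norm. -/
structure IsRotHomogDist (ρ : Heis n → Heis n → ℝ) : Prop where
  eq_zero_iff : ∀ p q, ρ p q = 0 ↔ p = q
  symm : ∀ p q, ρ p q = ρ q p
  triangle : ∀ p q r, ρ p r ≤ ρ p q + ρ q r
  heisMul_left : ∀ g p q, ρ (heisMul g p) (heisMul g q) = ρ p q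
  heisDil_heisDil : ∀ r : ℝ, 0 < r → ∀ p q, ρ (heisDil r p) (heisDil r q) = r * ρ p q
  eq_of_horSq_eq : ∀ (x y x' y' : Fin n → ℝ) (t : ℝ), horSq x y = horSq x' y' →
    ρ 0 (x, y, t) = ρ 0 (x', y', t)

namespace IsRotHomogDist

variable {ρ : Heis n → Heis n → ℝ} (hρ : IsRotHomogDist ρ)

include hρ

lemma nonneg (p q : Heis n) : 0 ≤ ρ p q := by
  linarith [hρ.triangle p q p, hρ.symm q p, (hρ.eq_zero_iff p p).2 rfl]

lemma eq_zero_heisInv_heisMul (p q : Heis n) : ρ p q = ρ 0 (heisMul (heisInv p) q) := by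
  rw [← hρ.heisMul_left (heisInv p) p q, heisInv_heisMul_self]

lemma self_heisMul (p q : Heis n) : ρ p (heisMul p q) = ρ 0 q := by
  rw [hρ.eq_zero_heisInv_heisMul, heisInv_heisMul_cancel_left]

lemma zero_heisMul_le (p q : Heis n) : ρ 0 (heisMul p q) ≤ ρ 0 p + ρ 0 q := by
  simpa only [hρ.self_heisMul] using hρ.triangle 0 p (heisMul p q)

lemma zero_heisInv (p : Heis n) : ρ 0 (heisInv p) = ρ 0 p := by
  rw [← hρ.heisMul_left p 0 (heisInv p), heisMul_zero, heisMul_heisInv_self, hρ.symm]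

lemma zero_heisDil {r : ℝ} (hr : 0 < r) (p : Heis n) : ρ 0 (heisDil r p) = r * ρ 0 p := by
  rw [← hρ.heisDil_heisDil r hr, heisDil_zero]

lemma zero_pos {p : Heis n} (hp : p ≠ 0) : 0 < ρ 0 p :=
  (hρ.nonneg 0 p).lt_of_ne fun h0 => hp ((hρ.eq_zero_iff 0 p).1 h0.symm).symm

lemma zero_horizLine_one_pos (i : Fin n) : 0 < ρ 0 (horizLine i 1) := by
  refine hρ.zero_pos fun h0 => one_ne_zero (α := ℝ) ?_
  simpa [horizLine] using congrFun (congrArg Prod.fst h0) i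

lemma zero_vertical_one_pos : 0 < ρ 0 ((0, 0, 1) : Heis n) :=
  hρ.zero_pos fun h0 => one_ne_zero (α := ℝ) (congrArg (fun p : Heis n => p.2.2) h0)

lemma zero_horizLine (i : Fin n) (s : ℝ) : ρ 0 (horizLine i s) = |s| * ρ 0 (horizLine i 1) := by
  rcases lt_trichotomy s 0 with hs | rfl | hs
  · rw [← hρ.zero_heisInv, heisInv_horizLine, abs_of_neg hs, ← hρ.zero_heisDil (neg_pos.2 hs),
      heisDil_horizLine, mul_one]
  · rw [horizLine_zero, (hρ.eq_zero_iff 0 0).2 rfl, abs_zero, zero_mul]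
  · rw [abs_of_pos hs, ← hρ.zero_heisDil hs, heisDil_horizLine, mul_one]

lemma zero_horizontal (i : Fin n) (x y : Fin n → ℝ) :
    ρ 0 (x, y, 0) = √(horSq x y) * ρ 0 (horizLine i 1) := by
  have hnonneg : 0 ≤ horSq x y := Finset.sum_nonneg fun j _ => by positivity
  rw [← abs_of_nonneg (Real.sqrt_nonneg (horSq x y)), ← hρ.zero_horizLine]
  refine hρ.eq_of_horSq_eq _ _ _ _ _ ?_
  calc horSq x y = √(horSq x y) ^ 2 := (Real.sq_sqrt hnonneg).symm
    _ = horSq (Pi.single i √(horSq x y)) 0 := by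
        rw [horSq.eq_def (Pi.single i _)]
        simp [Pi.single_apply, ite_pow]

lemma zero_vertical (t : ℝ) : ρ 0 ((0, 0, t) : Heis n) = √|t| * ρ 0 ((0, 0, 1) : Heis n) := by
  rcases lt_trichotomy t 0 with ht | rfl | ht
  · rw [← hρ.zero_heisDil (Real.sqrt_pos.2 (abs_pos.2 ht.ne)), ← hρ.zero_heisInv]
    simp [heisDil, heisInv, abs_of_neg ht, Real.sq_sqrt (neg_pos.2 ht).le]
  · rw [abs_zero, Real.sqrt_zero, zero_mul]
    exact (hρ.eq_zero_iff 0 0).2 rfl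
  · rw [← hρ.zero_heisDil (Real.sqrt_pos.2 (abs_pos.2 ht.ne'))]
    simp [heisDil, abs_of_pos ht, Real.sq_sqrt ht.le]

lemma zero_le_add (i : Fin n) (g : Heis n) : ρ 0 g ≤
    √(horSq g.1 g.2.1) * ρ 0 (horizLine i 1) + √|g.2.2| * ρ 0 ((0, 0, 1) : Heis n) := by
  rw [← hρ.zero_horizontal, ← hρ.zero_vertical]
  simpa only [heisMul_vertical, zero_add] using hρ.zero_heisMul_le (g.1, g.2.1, 0) (0, 0, g.2.2)

-- The product of `(x, y, t)` and its rotation `(-x, -y, t)` is the vertical point `(0, 0, 2 t)`.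
lemma sqrt_abs_mul_le (g : Heis n) : √|g.2.2| * ρ 0 ((0, 0, 1) : Heis n) ≤ 2 * ρ 0 g := by
  have hrot : ρ 0 (-g.1, -g.2.1, g.2.2) = ρ 0 g :=
    hρ.eq_of_horSq_eq _ _ g.1 g.2.1 _ (by simp [horSq])
  have hmul : heisMul g (-g.1, -g.2.1, g.2.2) = ((0, 0, 2 * g.2.2) : Heis n) := by
    refine Prod.ext (add_neg_cancel _) (Prod.ext (add_neg_cancel _) ?_)
    simp [heisMul, mul_comm, mul_two]
  have hvert := hρ.zero_heisMul_le g (-g.1, -g.2.1, g.2.2)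
  rw [hmul, hρ.zero_vertical, hrot] at hvert
  calc √|g.2.2| * ρ 0 ((0, 0, 1) : Heis n) ≤ √|2 * g.2.2| * ρ 0 ((0, 0, 1) : Heis n) := by
        refine mul_le_mul_of_nonneg_right (Real.sqrt_le_sqrt ?_) (hρ.nonneg _ _)
        rw [abs_mul, abs_two]
        linarith [abs_nonneg g.2.2]
    _ ≤ 2 * ρ 0 g := by linarith

lemma sqrt_horSq_mul_le (i : Fin n) (g : Heis n) :
    √(horSq g.1 g.2.1) * ρ 0 (horizLine i 1) ≤ 3 * ρ 0 g := by
  have hmul := hρ.zero_heisMul_le (g.1, g.2.1, g.2.2) (0, 0, -g.2.2)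
  rw [heisMul_vertical, add_neg_cancel, hρ.zero_horizontal i, hρ.zero_vertical, abs_neg] at hmul
  linarith [hρ.sqrt_abs_mul_le g]

lemma norm_le (i : Fin n) (g : Heis n) : ‖g‖ ≤
    max (3 * ρ 0 g / ρ 0 (horizLine i 1)) ((2 * ρ 0 g / ρ 0 ((0, 0, 1) : Heis n)) ^ 2) := by
  have hhor : √(horSq g.1 g.2.1) ≤ 3 * ρ 0 g / ρ 0 (horizLine i 1) :=
    (le_div_iff₀ (hρ.zero_horizLine_one_pos i)).2 (hρ.sqrt_horSq_mul_le i g)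
  have hvert : √|g.2.2| ≤ 2 * ρ 0 g / ρ 0 ((0, 0, 1) : Heis n) :=
    (le_div_iff₀ hρ.zero_vertical_one_pos).2 (hρ.sqrt_abs_mul_le g)
  have hcoord : ∀ j, g.1 j ^ 2 + g.2.1 j ^ 2 ≤ horSq g.1 g.2.1 := fun j =>
    Finset.single_le_sum (f := fun j => g.1 j ^ 2 + g.2.1 j ^ 2)
      (fun j _ => by positivity) (Finset.mem_univ j)
  have hnonneg := (Real.sqrt_nonneg _).trans hhor
  refine max_le (le_max_of_le_left ?_) (max_le (le_max_of_le_left ?_) (le_max_of_le_right ?_))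
  · refine (pi_norm_le_iff_of_nonneg hnonneg).2 fun j => (Real.abs_le_sqrt ?_).trans hhor
    linarith [hcoord j, sq_nonneg (g.2.1 j)]
  · refine (pi_norm_le_iff_of_nonneg hnonneg).2 fun j => (Real.abs_le_sqrt ?_).trans hhor
    linarith [hcoord j, sq_nonneg (g.1 j)]
  · simpa only [Real.norm_eq_abs, Real.sq_sqrt (abs_nonneg _)] using
      pow_le_pow_left₀ (Real.sqrt_nonneg _) hvert 2

lemma exists_forall_norm_lt_of_le (i : Fin n) (r : ℝ) :
    ∃ M > 0, ∀ g : Heis n, ρ 0 g ≤ r → ‖g‖ < M := by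
  have hpos := hρ.zero_horizLine_one_pos i
  have hpos' := hρ.zero_vertical_one_pos (n := n)
  refine ⟨max (3 * r / ρ 0 (horizLine i 1)) ((2 * r / ρ 0 ((0, 0, 1) : Heis n)) ^ 2) + 1,
    add_pos_of_nonneg_of_pos (le_max_of_le_right (sq_nonneg _)) one_pos, fun g hg => ?_⟩
  have := hρ.nonneg 0 g
  refine lt_add_of_le_of_pos ((hρ.norm_le i g).trans ?_) one_pos
  gcongr

lemma exists_forall_norm_lt (i : Fin n) {η : ℝ} (hη : 0 < η) :
    ∃ ε > 0, ∀ g : Heis n, ρ 0 g < ε → ‖g‖ < η := by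
  have hcont : Continuous fun r : ℝ => max (3 * r / ρ 0 (horizLine i 1))
    ((2 * r / ρ 0 ((0, 0, 1) : Heis n)) ^ 2) := by fun_prop
  have hsmall := (hcont.tendsto 0).eventually (gt_mem_nhds (a := η) (by simpa using hη))
  obtain ⟨ε, hε, hball⟩ := Metric.eventually_nhds_iff.1 hsmall
  refine ⟨ε, hε, fun g hg => (hρ.norm_le i g).trans_lt (hball ?_)⟩
  rwa [Real.dist_eq, sub_zero, abs_of_nonneg (hρ.nonneg _ _)]

lemma eventually_lt (i : Fin n) (x : Heis n) {ε : ℝ} (hε : 0 < ε) : ∀ᶠ y in 𝓝 x, ρ x y < ε := by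
  have hcont : Continuous fun y : Heis n =>
      √(horSq (heisMul (heisInv x) y).1 (heisMul (heisInv x) y).2.1) * ρ 0 (horizLine i 1) +
        √|(heisMul (heisInv x) y).2.2| * ρ 0 ((0, 0, 1) : Heis n) := by
    have := continuous_heisMul_left (heisInv x)
    unfold horSq
    fun_prop
  filter_upwards [(hcont.tendsto x).eventually
    (gt_mem_nhds (a := ε) (by simpa [heisInv_heisMul_self, horSq] using hε))] with y hy
  rw [hρ.eq_zero_heisInv_heisMul]
  exact (hρ.zero_le_add i _).trans_lt hy

lemma exists_ball_subset (i : Fin n) {x : Heis n} {s : Set (Heis n)} (hs : s ∈ 𝓝 x) :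
    ∃ ε > 0, ∀ y, ρ x y < ε → y ∈ s := by
  have hpre : heisMul x ⁻¹' s ∈ 𝓝 0 :=
    (continuous_heisMul_left x).continuousAt (by rwa [heisMul_zero])
  obtain ⟨η, hη, hball⟩ := Metric.mem_nhds_iff.1 hpre
  obtain ⟨ε, hε, hnorm⟩ := hρ.exists_forall_norm_lt i hη
  refine ⟨ε, hε, fun y hy => ?_⟩
  rw [hρ.eq_zero_heisInv_heisMul] at hy
  simpa only [mem_preimage, heisMul_heisInv_cancel_left] using
    hball (mem_ball_zero_iff.2 (hnorm _ hy))

lemma isCompatibleDist (i : Fin n) : IsCompatibleDist ρ where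
  self x := (hρ.eq_zero_iff x x).2 rfl
  eq_of_zero := (hρ.eq_zero_iff _ _).1
  symm := hρ.symm
  triangle := hρ.triangle
  isOpen_iff s := by
    refine ⟨fun hs x hx => hρ.exists_ball_subset i (hs.mem_nhds hx), fun hs => ?_⟩
    refine isOpen_iff_mem_nhds.2 fun x hx => ?_
    obtain ⟨ε, hε, hball⟩ := hs x hx
    filter_upwards [hρ.eventually_lt i x hε] with y hy using hball y hy

end IsRotHomogDist

end HomogeneousDistance

section InvariantGauge

open Set Filter Topology MeasureTheory

variable {n : ℕ} {ρ : Heis n → Heis n → ℝ} {F : Set (Set (Heis n) × ℝ)}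

/-- A gauge on `Heis n` that is stable under the surjective isometries of `ρ` and scales with the
dilations. -/
structure IsInvariantGauge (ρ : Heis n → Heis n → ℝ) (F : Set (Set (Heis n) × ℝ)) : Prop
    extends IsGauge ρ F where
  image_mem : ∀ ψ : Heis n → Heis n, Function.Surjective ψ → (∀ x y, ρ (ψ x) (ψ y) = ρ x y) →
    ∀ e ∈ F, (ψ '' e.1, e.2) ∈ F
  heisDil_mem : ∀ r : ℝ, 0 < r → ∀ e ∈ F, (heisDil r '' e.1, r * e.2) ∈ F

lemma IsInvariantGauge.heisMul_mem (hF : IsInvariantGauge ρ F) (hρ : IsRotHomogDist ρ)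
    (p : Heis n) {E : Set (Heis n)} {δ : ℝ} (hE : (E, δ) ∈ F) : (heisMul p '' E, δ) ∈ F :=
  hF.image_mem (heisMul p) (fun y => ⟨_, heisMul_heisInv_cancel_left p y⟩) (hρ.heisMul_left p) _ hE

lemma image_closedBall_of_surjective {X : Type*} {ρ : X → X → ℝ} {ψ : X → X} {k : ℝ} (hk : 0 < k)
    (hψ : Function.Surjective ψ) (hscale : ∀ x y, ρ (ψ x) (ψ y) = k * ρ x y) (x : X) (r : ℝ) :
    ψ '' {y | ρ x y ≤ r} = {y | ρ (ψ x) y ≤ k * r} := by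
  ext y
  obtain ⟨z, rfl⟩ := hψ y
  refine ⟨?_, fun hz => ⟨z, ?_, rfl⟩⟩
  · rintro ⟨w, hw, hwz⟩
    rw [mem_ofPred_eq, ← hwz, hscale]
    exact mul_le_mul_of_nonneg_left hw hk.le
  · rw [mem_ofPred_eq, hscale] at hz
    exact le_of_mul_le_mul_left hz hk

lemma IsRotHomogDist.isInvariantGauge_ballGauge (hρ : IsRotHomogDist ρ) (i : Fin n) :
    IsInvariantGauge ρ (ballGauge ρ) where
  toIsGauge := (hρ.isCompatibleDist i).isGauge_ballGauge
  image_mem := by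
    rintro ψ hψ hiso _ ⟨x, r, hr, rfl⟩
    refine ⟨ψ x, r, hr, Prod.ext ?_ rfl⟩
    simpa only [one_mul] using
      image_closedBall_of_surjective one_pos hψ (fun x y => by rw [hiso, one_mul]) x r
  heisDil_mem := by
    rintro k hk _ ⟨x, r, hr, rfl⟩
    exact ⟨heisDil k x, k * r, by positivity, Prod.ext (image_closedBall_of_surjective hk
      (heisDilEquiv hk.ne').surjective (hρ.heisDil_heisDil k hk) x r) (mul_left_comm _ _ _)⟩

lemma IsRotHomogDist.isInvariantGauge_diamGauge (hρ : IsRotHomogDist ρ) (i : Fin n) :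
    IsInvariantGauge ρ (diamGauge ρ) where
  toIsGauge := (hρ.isCompatibleDist i).isGauge_diamGauge
  image_mem := by
    rintro ψ - hiso e ⟨hpos, hdiam⟩
    refine ⟨hpos, ?_⟩
    rintro _ ⟨x, hx, rfl⟩ _ ⟨y, hy, rfl⟩
    exact (hiso x y).trans_le (hdiam x hx y hy)
  heisDil_mem := by
    rintro k hk e ⟨hpos, hdiam⟩
    refine ⟨mul_pos hk hpos, ?_⟩
    rintro _ ⟨x, hx, rfl⟩ _ ⟨y, hy, rfl⟩
    rw [hρ.heisDil_heisDil k hk]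
    exact mul_le_mul_of_nonneg_left (hdiam x hx y hy) hk.le

/-- The largest area that a set of size one in `F` cuts out of the hyperplane `{p | p.1 i = 0}`,
i.e. the density of the surface measure relative to the measure generated by `F`. -/
noncomputable def vertDensity (i : Fin n) (F : Set (Set (Heis n) × ℝ)) : ℝ≥0∞ :=
  ⨆ (E : Set (Heis n)) (_ : (E, (1 : ℝ)) ∈ F), vertMeasure i E

lemma vertMeasure_le_vertDensity (i : Fin n) {E : Set (Heis n)} (hE : (E, (1 : ℝ)) ∈ F) :
    vertMeasure i E ≤ vertDensity i F :=
  le_iSup₂ (f := fun (E : Set (Heis n)) (_ : (E, (1 : ℝ)) ∈ F) => vertMeasure i E) E hE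

lemma IsInvariantGauge.vertMeasure_le (hF : IsInvariantGauge ρ F) (i : Fin n) {E : Set (Heis n)}
    {δ : ℝ} (hE : (E, δ) ∈ F) :
    vertMeasure i E ≤ vertDensity i F * ENNReal.ofReal δ ^ (2 * (n : ℝ) + 1) := by
  have hδ : 0 < δ := hF.pos _ hE
  have hunit := hF.heisDil_mem δ⁻¹ (inv_pos.2 hδ) _ hE
  simp only [inv_mul_cancel₀ hδ.ne'] at hunit
  calc vertMeasure i E = vertMeasure i (heisDil δ '' (heisDil δ⁻¹ '' E)) := by
        simp only [image_image, heisDil_heisDil, mul_inv_cancel₀ hδ.ne', heisDil_one, image_id']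
    _ = vertMeasure i (heisDil δ⁻¹ '' E) * ENNReal.ofReal δ ^ (2 * (n : ℝ) + 1) := by
        rw [vertMeasure_heisDil_image i hδ, mul_comm]
    _ ≤ vertDensity i F * ENNReal.ofReal δ ^ (2 * (n : ℝ) + 1) := by
        gcongr
        exact vertMeasure_le_vertDensity i hunit

lemma IsRotHomogDist.vertDensity_ne_zero (hρ : IsRotHomogDist ρ) (hF : IsGauge ρ F)
    (i : Fin n) : vertDensity i F ≠ 0 := by
  have hball := hF.ball_mem 0 (1 / 2) (by norm_num)
  rw [mul_one_div_cancel two_ne_zero] at hball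
  obtain ⟨η, hη, hsub⟩ := Metric.eventually_nhds_iff_ball.1
    (hρ.eventually_lt i 0 (ε := 1 / 2) (by norm_num))
  exact ((vertMeasure_ball_pos i hη).trans_le ((measure_mono fun y hy => (hsub y hy).le).trans
    (vertMeasure_le_vertDensity i hball))).ne'

lemma IsRotHomogDist.vertDensity_ne_top (hρ : IsRotHomogDist ρ) (hF : IsGauge ρ F)
    (i : Fin n) : vertDensity i F ≠ ⊤ := by
  obtain ⟨M, hM, hnorm⟩ := hρ.exists_forall_norm_lt_of_le i 1
  refine ((iSup₂_le fun E hE => ?_).trans_lt (vertMeasure_ball_lt_top i hM)).ne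
  rcases (E ∩ {p | p.1 i = 0}).eq_empty_or_nonempty with hempty | ⟨w, hw, hw0 : w.1 i = 0⟩
  · rw [← vertMeasure_inter_hyperplane, hempty, measure_empty]
    exact zero_le
  · rw [← vertMeasure_heisMul_image (p := heisInv w) (by simp [heisInv, hw0]) E]
    refine measure_mono ?_
    rintro _ ⟨x, hx, rfl⟩
    have hdist := hF.dist_le _ hE w hw x hx
    rw [hρ.eq_zero_heisInv_heisMul] at hdist
    exact mem_ball_zero_iff.2 (hnorm _ hdist)

lemma IsGauge.vertDensity_le_vertDensity_diamGauge (hF : IsGauge ρ F) (i : Fin n) :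
    vertDensity i F ≤ vertDensity i (diamGauge ρ) :=
  iSup₂_le fun _ hE => vertMeasure_le_vertDensity i ⟨hF.pos _ hE, hF.dist_le _ hE⟩

lemma exists_mem_ballGauge_superset {X : Type*} [Nonempty X] {ρ : X → X → ℝ} {e : Set X × ℝ}
    (he : e ∈ diamGauge ρ) : ∃ e' ∈ ballGauge ρ, e.1 ⊆ e'.1 ∧ e'.2 = 2 * e.2 := by
  rcases e.1.eq_empty_or_nonempty with hempty | ⟨x, hx⟩
  · exact ⟨_, ⟨Classical.arbitrary X, e.2, he.1, rfl⟩, hempty ▸ empty_subset _, rfl⟩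
  · exact ⟨_, ⟨x, e.2, he.1, rfl⟩, fun y hy => he.2 x hx y hy, rfl⟩

lemma IsRotHomogDist.vertDensity_diamGauge_le (hρ : IsRotHomogDist ρ) (i : Fin n) :
    vertDensity i (diamGauge ρ) ≤
      vertDensity i (ballGauge ρ) * ENNReal.ofReal 2 ^ (2 * (n : ℝ) + 1) := by
  refine iSup₂_le fun E hE => ?_
  obtain ⟨⟨B, δ⟩, hB, hEB, hδ⟩ := exists_mem_ballGauge_superset hE
  obtain rfl : δ = 2 := by simpa using hδ
  exact (measure_mono hEB).trans ((hρ.isInvariantGauge_ballGauge i).vertMeasure_le i hB)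

end InvariantGauge

section HomogeneousMorphism

open Set Filter Topology MeasureTheory

variable {n : ℕ} {L : Heis n → ℝ} (hL : IsHeisHomMorphR L)

namespace IsHeisHomMorphR

include hL

lemma map_zero : L 0 = 0 := by
  have := hL.1 0 0
  rw [heisMul_zero] at this
  linarith

lemma map_heisInv (p : Heis n) : L (heisInv p) = -L p := by
  have := hL.1 p (heisInv p)
  rw [heisMul_heisInv_self, hL.map_zero] at this
  linarith

-- Along the centre `L` is additive, but the dilations scale the centre quadratically.
lemma map_vertical (t : ℝ) : L (0, 0, t) = 0 := by
  have hadd : ∀ s, L (0, 0, s + s) = L (0, 0, s) + L (0, 0, s) := fun s => by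
    rw [← hL.1, heisMul_vertical]
  have hdil := hL.2 2 two_pos (0, 0, t)
  have hquad : heisDil 2 ((0, 0, t) : Heis n) = (0, 0, (t + t) + (t + t)) :=
    Prod.ext (smul_zero _) (Prod.ext (smul_zero _) (by simp only [heisDil]; ring))
  rw [hquad, hadd, hadd] at hdil
  linarith

lemma eq_horizontal (x y : Fin n → ℝ) (t : ℝ) : L (x, y, t) = L (x, y, 0) := by
  rw [← zero_add t, ← heisMul_vertical, hL.1, hL.map_vertical, add_zero]

lemma map_heisDil (r : ℝ) (p : Heis n) : L (heisDil r p) = r * L p := by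
  rcases lt_trichotomy r 0 with hr | rfl | hr
  · have hinv : heisInv (heisDil (-r) p) = (r • p.1, r • p.2.1, -((-r) ^ 2 * p.2.2)) := by
      simp [heisInv, heisDil]
    have hpos := hL.map_heisInv (heisDil (-r) p)
    rw [hinv, hL.2 _ (neg_pos.2 hr), hL.eq_horizontal] at hpos
    rw [heisDil, hL.eq_horizontal, hpos]
    ring
  · have hzero : heisDil 0 p = 0 := by simp [heisDil, Prod.zero_eq_mk]
    rw [hzero, hL.map_zero, zero_mul]
  · exact hL.2 r hr p

lemma map_horizLine (i : Fin n) (u : ℝ) : L (horizLine i u) = u * L (horizLine i 1) := by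
  rw [← hL.map_heisDil, heisDil_horizLine, mul_one]

omit hL in
/-- A homogeneous morphism as a linear functional of the horizontal coordinates. -/
def toLinearMap (hL : IsHeisHomMorphR L) : ((Fin n → ℝ) × (Fin n → ℝ)) →ₗ[ℝ] ℝ where
  toFun z := L (z.1, z.2, 0)
  map_add' z w := by
    rw [← hL.1]
    exact (hL.eq_horizontal _ _ _).symm
  map_smul' r z := by
    rw [RingHom.id_apply, smul_eq_mul, ← hL.map_heisDil, heisDil, mul_zero]
    rfl

lemma toLinearMap_apply (g : Heis n) : hL.toLinearMap (g.1, g.2.1) = L g :=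
  (hL.eq_horizontal g.1 g.2.1 g.2.2).symm

protected lemma continuous : Continuous L := by
  rw [← funext hL.toLinearMap_apply]
  exact hL.toLinearMap.continuous_of_finiteDimensional.comp (by fun_prop)

end IsHeisHomMorphR

end HomogeneousMorphism

section PansuDifferentiability

open Set Filter Topology MeasureTheory

variable {n : ℕ} {ρ : Heis n → Heis n → ℝ} {Ω : Set (Heis n)} {f : Heis n → ℝ}
  {D : Heis n → Heis n → ℝ}

/-- `f` is continuously Pansu differentiable on `Ω`, with differential `D q` at `q`; the continuity
of `D` is uniform on the unit ball of `ρ`. -/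
structure IsPansuC1On (ρ : Heis n → Heis n → ℝ) (Ω : Set (Heis n)) (f : Heis n → ℝ)
    (D : Heis n → Heis n → ℝ) : Prop where
  isHeisHomMorphR : ∀ q ∈ Ω, IsHeisHomMorphR (D q)
  differential : ∀ q ∈ Ω, ∀ ε : ℝ, 0 < ε → ∃ r > 0, ∀ x : Heis n, ρ q x < r →
    |f x - f q - D q (heisMul (heisInv q) x)| ≤ ε * ρ q x
  continuous : ∀ q ∈ Ω, ∀ ε : ℝ, 0 < ε → ∃ r > 0, ∀ q' ∈ Ω, ρ q q' < r →
    ∀ x : Heis n, |D q x - D q' x| ≤ ε * ρ 0 x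

lemma IsPansuC1On.mono (hf : IsPansuC1On ρ Ω f D) {U : Set (Heis n)} (hU : U ⊆ Ω) :
    IsPansuC1On ρ U f D where
  isHeisHomMorphR q hq := hf.isHeisHomMorphR q (hU hq)
  differential q hq := hf.differential q (hU hq)
  continuous q hq ε hε := by
    obtain ⟨r, hr, hD⟩ := hf.continuous q (hU hq) ε hε
    exact ⟨r, hr, fun q' hq' => hD q' (hU hq')⟩

lemma IsPansuC1On.div_const (hf : IsPansuC1On ρ Ω f D) {c : ℝ} (hc : 0 < c) :
    IsPansuC1On ρ Ω (fun x => f x / c) (fun q x => D q x / c) where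
  isHeisHomMorphR q hq := by
    obtain ⟨hmul, hdil⟩ := hf.isHeisHomMorphR q hq
    exact ⟨fun p p' => by simp only [hmul, add_div],
      fun r hr p => by simp only [hdil r hr, mul_div_assoc]⟩
  differential q hq ε hε := by
    obtain ⟨r, hr, hfr⟩ := hf.differential q hq (ε * c) (by positivity)
    refine ⟨r, hr, fun x hx => ?_⟩
    rw [← sub_div, ← sub_div, abs_div, abs_of_pos hc, div_le_iff₀ hc, mul_right_comm]
    exact hfr x hx
  continuous q hq ε hε := by
    obtain ⟨r, hr, hD⟩ := hf.continuous q hq (ε * c) (by positivity)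
    refine ⟨r, hr, fun q' hq' hqq' x => ?_⟩
    rw [← sub_div, abs_div, abs_of_pos hc, div_le_iff₀ hc, mul_right_comm]
    exact hD q' hq' hqq' x

lemma heisMul_vertProj_horizLine (i : Fin n) (x : Heis n) :
    heisMul (vertProj i x) (horizLine i (x.1 i)) = x := by
  rw [vertProj, heisMul_assoc, horizLine_heisMul_horizLine, neg_add_cancel, horizLine_zero,
    heisMul_zero]

lemma heisMul_horizLine_eq_add_smul (i : Fin n) (g : Heis n) (u : ℝ) :
    heisMul g (horizLine i u) = g + u • ((Pi.single i 1, 0, -g.2.1 i / 2) : Heis n) := by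
  rw [heisMul_horizLine]
  refine Prod.ext ?_ (Prod.ext ?_ ?_)
  · simp [← Pi.single_smul]
  · simp
  · simp only [Prod.snd_add, Prod.smul_snd, smul_eq_mul]
    ring

lemma continuous_heisMul_horizLine (i : Fin n) (g : Heis n) :
    Continuous fun u : ℝ => heisMul g (horizLine i u) := by
  simp only [heisMul_horizLine_eq_add_smul]
  fun_prop

lemma convex_setOf_heisMul_horizLine_mem {U : Set (Heis n)} (hU : Convex ℝ U) (i : Fin n)
    (g : Heis n) : Convex ℝ {u : ℝ | heisMul g (horizLine i u) ∈ U} := by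
  have := hU.affine_preimage
    (AffineMap.lineMap (k := ℝ) g (g + ((Pi.single i 1, 0, -g.2.1 i / 2) : Heis n)))
  simpa only [heisMul_horizLine_eq_add_smul, preimage, AffineMap.lineMap_apply, vsub_eq_sub,
    add_sub_cancel_right, vadd_eq_add, add_comm g] using this

lemma IsRotHomogDist.heisMul_horizLine_heisMul_horizLine (hρ : IsRotHomogDist ρ) (i : Fin n)
    (g : Heis n) (u v : ℝ) :
    ρ (heisMul g (horizLine i u)) (heisMul g (horizLine i v)) =
      |v - u| * ρ 0 (horizLine i 1) := by
  rw [hρ.heisMul_left, hρ.eq_zero_heisInv_heisMul, heisInv_horizLine, horizLine_heisMul_horizLine,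
    hρ.zero_horizLine, neg_add_eq_sub]

lemma IsPansuC1On.hasDerivAt_horizLine (hρ : IsRotHomogDist ρ) (hf : IsPansuC1On ρ Ω f D)
    (i : Fin n) (g : Heis n) {u : ℝ} (hu : heisMul g (horizLine i u) ∈ Ω) :
    HasDerivAt (fun u => f (heisMul g (horizLine i u)))
      (D (heisMul g (horizLine i u)) (horizLine i 1)) u := by
  rw [hasDerivAt_iff_isLittleO, Asymptotics.isLittleO_iff]
  intro k hk
  have hN := hρ.zero_horizLine_one_pos i
  obtain ⟨r, hr, hfr⟩ := hf.differential _ hu (k / ρ 0 (horizLine i 1)) (by positivity)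
  have hnear : ∀ᶠ v in 𝓝 u, |v - u| * ρ 0 (horizLine i 1) < r := by
    have hcont : Continuous fun v => |v - u| * ρ 0 (horizLine i 1) := by fun_prop
    exact (hcont.tendsto u).eventually (gt_mem_nhds (a := r) (by simpa using hr))
  filter_upwards [hnear] with v hv
  have hstep : heisMul (heisInv (heisMul g (horizLine i u))) (heisMul g (horizLine i v)) =
      horizLine i (v - u) := by
    have hv : heisMul g (horizLine i v) =
        heisMul (heisMul g (horizLine i u)) (horizLine i (v - u)) := by
      rw [heisMul_assoc, horizLine_heisMul_horizLine, add_sub_cancel]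
    rw [hv, heisInv_heisMul_cancel_left]
  have hle := hfr (heisMul g (horizLine i v))
    (by rwa [hρ.heisMul_horizLine_heisMul_horizLine])
  rw [hstep, (hf.isHeisHomMorphR _ hu).map_horizLine,
    hρ.heisMul_horizLine_heisMul_horizLine, mul_comm |v - u|, ← mul_assoc,
    div_mul_cancel₀ _ hN.ne'] at hle
  simpa only [Real.norm_eq_abs, smul_eq_mul] using hle

lemma IsPansuC1On.continuousOn (hρ : IsRotHomogDist ρ) (i : Fin n) (hf : IsPansuC1On ρ Ω f D) :
    ContinuousOn f Ω := by
  refine fun q hq => ContinuousAt.continuousWithinAt (Metric.continuousAt_iff'.2 fun ε hε => ?_)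
  obtain ⟨r, hr, hfr⟩ := hf.differential q hq 1 one_pos
  have hD := hf.isHeisHomMorphR q hq
  have hcont : Continuous fun x => |D q (heisMul (heisInv q) x)| :=
    (hD.continuous.comp (continuous_heisMul_left (heisInv q))).abs
  have hsmall := (hcont.tendsto q).eventually (gt_mem_nhds (a := ε / 2)
    (by rw [heisInv_heisMul_self, hD.map_zero, abs_zero]; exact half_pos hε))
  filter_upwards [hsmall, hρ.eventually_lt i q hr, hρ.eventually_lt i q (half_pos hε)]
    with x hDx hxr hxε
  have hdiff := abs_sub_abs_le_abs_sub (f x - f q) (D q (heisMul (heisInv q) x))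
  rw [Real.dist_eq]
  linarith [hfr x hxr]

end PansuDifferentiability

section SurfaceMeasure

open Set Filter Topology MeasureTheory

variable {n : ℕ} {i : Fin n} {S : Set (Heis n)}

/-- The measure on `S` that assigns to a set the area of its projection to the hyperplane
`{p | p.1 i = 0}`. It has this meaning when `vertProj i` is injective on `S`. -/
noncomputable def surfaceMeasure (i : Fin n) (S : Set (Heis n)) : Measure (Heis n) :=
  ((vertMeasure i).comap (S.domRestrict (vertProj i))).map Subtype.val

lemma surfaceMeasure_apply (hS : MeasurableSet S) (hinj : InjOn (vertProj i) S)
    (E : Set (Heis n)) : surfaceMeasure i S E = vertMeasure i (vertProj i '' (E ∩ S)) := by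
  rw [surfaceMeasure, (MeasurableEmbedding.subtype_coe hS).map_apply,
    ((continuous_vertProj i).continuousOn.measurableEmbedding hS hinj).comap_apply,
    image_domRestrict]

lemma isFiniteMeasure_surfaceMeasure (hS : MeasurableSet S) (hinj : InjOn (vertProj i) S)
    (hbdd : Bornology.IsBounded S) : IsFiniteMeasure (surfaceMeasure i S) := by
  refine ⟨?_⟩
  rw [surfaceMeasure_apply hS hinj, univ_inter]
  obtain ⟨R, hR, hball⟩ :=
    (hbdd.isCompact_closure.image (continuous_vertProj i)).isBounded.subset_ball_lt 0 0
  exact (measure_mono ((image_mono subset_closure).trans hball)).trans_lt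
    (vertMeasure_ball_lt_top i hR)

end SurfaceMeasure

section NearlyCoordinateFunctions

open Set Filter Topology MeasureTheory

variable {n : ℕ} {ρ : Heis n → Heis n → ℝ} {i : Fin n} {σ : ℝ} {U : Set (Heis n)}
  {f : Heis n → ℝ} {D : Heis n → Heis n → ℝ} {F F' : Set (Set (Heis n) × ℝ)}

/-- `f` is continuously Pansu differentiable on the bounded convex open set `U`, and there its
differentials are close to the `i`-th coordinate. The factor `4 * ρ 0 (horizLine i 1)` normalises
the defect `σ` so that sets of size `δ` only have to be enlarged by `σ * δ` when the level set is
compared with the hyperplane `{p | p.1 i = 0}`. -/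
structure IsNearlyCoordOn (ρ : Heis n → Heis n → ℝ) (i : Fin n) (σ : ℝ) (U : Set (Heis n))
    (f : Heis n → ℝ) (D : Heis n → Heis n → ℝ) : Prop extends IsPansuC1On ρ U f D where
  isOpen : IsOpen U
  convex : Convex ℝ U
  isBounded : Bornology.IsBounded U
  abs_sub_le : ∀ q ∈ U, ∀ x, 4 * ρ 0 (horizLine i 1) * |D q x - x.1 i| ≤ σ * ρ 0 x

lemma IsInvariantGauge.vertDensity_mul_le (hF : IsInvariantGauge ρ F) (hρ : IsRotHomogDist ρ)
    {a b : ℝ≥0∞}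
    (h : ∀ E, (E, (1 : ℝ)) ∈ F → (0 : Heis n) ∈ E → vertMeasure i E * a ≤ b) :
    vertDensity i F * a ≤ b := by
  simp only [vertDensity, ENNReal.iSup_mul]
  refine iSup₂_le fun E hE => ?_
  rcases (E ∩ {p | p.1 i = 0}).eq_empty_or_nonempty with hempty | ⟨w, hw, hw0 : w.1 i = 0⟩
  · rw [← vertMeasure_inter_hyperplane, hempty, measure_empty, zero_mul]
    exact zero_le
  · rw [← vertMeasure_heisMul_image (p := heisInv w) (by simp [heisInv, hw0]) E]
    exact h _ (hF.heisMul_mem hρ _ hE) ⟨w, hw, heisInv_heisMul_self w⟩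

lemma ofReal_rpow_ne_zero {x d : ℝ} (hx : 0 < x) : ENNReal.ofReal x ^ d ≠ 0 :=
  (ENNReal.rpow_pos (ENNReal.ofReal_pos.2 hx) ENNReal.ofReal_ne_top).ne'

lemma ofReal_add_two_mul_rpow {σ δ d : ℝ} (hσ : 0 ≤ σ) (hd : 0 ≤ d) :
    ENNReal.ofReal (δ + 2 * (σ * δ)) ^ d =
      ENNReal.ofReal (1 + 2 * σ) ^ d * ENNReal.ofReal δ ^ d := by
  rw [← ENNReal.mul_rpow_of_nonneg _ _ hd, ← ENNReal.ofReal_mul (by positivity)]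
  ring_nf

namespace IsNearlyCoordOn

variable (hρ : IsRotHomogDist ρ) (hf : IsNearlyCoordOn ρ i σ U f D)

include hρ hf

lemma differential_horizLine_pos (hσ : σ ≤ 1) {q : Heis n} (hq : q ∈ U) :
    0 < D q (horizLine i 1) := by
  have hN := hρ.zero_horizLine_one_pos i
  have hdefect := hf.abs_sub_le q hq (horizLine i 1)
  rw [fst_horizLine_self, mul_right_comm] at hdefect
  have hclose := (le_of_mul_le_mul_right hdefect hN).trans hσ
  linarith [neg_abs_le (D q (horizLine i 1) - 1)]

lemma strictMonoOn_horizLine (hσ : σ ≤ 1) (g : Heis n) :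
    StrictMonoOn (fun u => f (heisMul g (horizLine i u))) {u | heisMul g (horizLine i u) ∈ U} := by
  refine strictMonoOn_of_deriv_pos (convex_setOf_heisMul_horizLine_mem hf.convex i g)
    (fun u hu => (hf.hasDerivAt_horizLine hρ i g hu).continuousAt.continuousWithinAt)
    fun u hu => ?_
  have hu := interior_subset hu
  rw [(hf.hasDerivAt_horizLine hρ i g hu).deriv]
  exact hf.differential_horizLine_pos hρ hσ hu

lemma injOn_vertProj (hσ : σ ≤ 1) : InjOn (vertProj i) {x ∈ U | f x = 0} := by
  rintro x ⟨hxU, hx⟩ y ⟨hyU, hy⟩ hxy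
  have hmem : ∀ z ∈ U, vertProj i x = vertProj i z →
      z.1 i ∈ {u | heisMul (vertProj i x) (horizLine i u) ∈ U} := fun z hz hxz => by
    rwa [hxz, mem_ofPred_eq, heisMul_vertProj_horizLine]
  have hcoord := (hf.strictMonoOn_horizLine hρ hσ (vertProj i x)).injOn
    (hmem x hxU rfl) (hmem y hyU hxy)
    (by rw [heisMul_vertProj_horizLine, hxy, heisMul_vertProj_horizLine, hx, hy])
  rw [← heisMul_vertProj_horizLine i x, ← heisMul_vertProj_horizLine i y, hxy, hcoord]

lemma measurableSet_zeros : MeasurableSet {x ∈ U | f x = 0} := by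
  have hopen := (hf.continuousOn hρ i).isOpen_inter_preimage hf.isOpen
    (isOpen_compl_singleton (x := (0 : ℝ)))
  have hdiff : {x ∈ U | f x = 0} = U \ (U ∩ f ⁻¹' {0}ᶜ) := by
    ext x
    simp
  rw [hdiff]
  exact hf.isOpen.measurableSet.diff hopen.measurableSet

lemma exists_abs_sub_le (hσ : 0 < σ) {p : Heis n} (hp : p ∈ U) (hp0 : f p = 0) :
    ∃ r > 0, ∀ x, ρ p x < r → x ∈ U ∧
      2 * ρ 0 (horizLine i 1) * |f x - (heisMul (heisInv p) x).1 i| ≤ σ * ρ p x := by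
  have hN := hρ.zero_horizLine_one_pos i
  obtain ⟨r₁, hr₁, hfr⟩ := hf.differential p hp (σ / (4 * ρ 0 (horizLine i 1))) (by positivity)
  obtain ⟨r₂, hr₂, hU⟩ := hρ.exists_ball_subset i (hf.isOpen.mem_nhds hp)
  refine ⟨min r₁ r₂, lt_min hr₁ hr₂, fun x hx => ⟨hU x (hx.trans_le (min_le_right _ _)), ?_⟩⟩
  have hdiff := hfr x (hx.trans_le (min_le_left _ _))
  have hclose := hf.abs_sub_le p hp (heisMul (heisInv p) x)
  rw [hp0, sub_zero, div_mul_eq_mul_div, le_div_iff₀ (by positivity)] at hdiff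
  rw [← hρ.eq_zero_heisInv_heisMul] at hclose
  have htri := mul_le_mul_of_nonneg_left (_root_.abs_sub_le (f x) (D p (heisMul (heisInv p) x))
    ((heisMul (heisInv p) x).1 i)) hN.le
  linarith

lemma surfaceMeasure_le (hσ0 : 0 < σ) (hσ : σ ≤ 1) (hF : IsInvariantGauge ρ F) {A : Set (Heis n)}
    (hA : A ⊆ {x ∈ U | f x = 0}) :
    surfaceMeasure i {x ∈ U | f x = 0} A ≤
      vertDensity i F * ENNReal.ofReal (1 + 2 * σ) ^ (2 * (n : ℝ) + 1) *
        gaugeMeasure F (2 * (n : ℝ) + 1) A := by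
  have hd : 0 ≤ 2 * (n : ℝ) + 1 := by positivity
  refine measure_le_mul_gaugeMeasure
    (mul_ne_zero (hρ.vertDensity_ne_zero hF.toIsGauge i)
      (ofReal_rpow_ne_zero (by positivity)))
    (ENNReal.mul_ne_top (hρ.vertDensity_ne_top hF.toIsGauge i)
      (ENNReal.rpow_ne_top_of_nonneg hd ENNReal.ofReal_ne_top)) fun p hp => ?_
  obtain ⟨r, hr, hnear⟩ := hf.exists_abs_sub_le hρ hσ0 (hA hp).1 (hA hp).2
  refine ⟨r, hr, ?_⟩
  rintro ⟨E, δ⟩ hE (hpE : p ∈ E) (hδr : δ < r)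
  have hδ : 0 < δ := hF.pos _ hE
  obtain ⟨G, hG, hEG⟩ := hF.exists_enlargement _ (hF.heisMul_mem hρ (heisInv p) hE) (σ * δ)
    (by positivity)
  have hsub : vertProj i '' (heisMul (heisInv p) '' (E ∩ {x ∈ U | f x = 0})) ⊆ G := by
    rintro _ ⟨_, ⟨x, ⟨hxE, -, hx0⟩, rfl⟩, rfl⟩
    refine hEG _ ⟨x, hxE, rfl⟩ _ ?_
    have hpx : ρ p x ≤ δ := hF.dist_le _ hE p hpE x hxE
    have hcoord := (hnear x (hpx.trans_lt hδr)).2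
    rw [hx0, zero_sub, abs_neg] at hcoord
    rw [vertProj, hρ.self_heisMul, hρ.zero_horizLine, abs_neg]
    nlinarith [mul_le_mul_of_nonneg_left hpx hσ0.le]
  rw [surfaceMeasure_apply (hf.measurableSet_zeros hρ) (hf.injOn_vertProj hρ hσ),
    ← vertMeasure_vertProj_heisMul_image i (heisInv p), mul_assoc,
    ← ofReal_add_two_mul_rpow hσ0.le hd]
  exact (measure_mono hsub).trans (hF.vertMeasure_le i hG)

lemma exists_heisMul_horizLine_mem (hσ0 : 0 < σ) (hσ : σ ≤ 1) {p : Heis n} (hp : p ∈ U)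
    (hp0 : f p = 0) :
    ∃ r₀ > 0, ∀ r, 0 < r → r < r₀ → ∀ w : Heis n, w.1 i = 0 → ρ 0 w ≤ r →
      ∃ u, |u| * ρ 0 (horizLine i 1) ≤ σ * r ∧
        heisMul p (heisMul w (horizLine i u)) ∈ {x ∈ U | f x = 0} := by
  have hN := hρ.zero_horizLine_one_pos i
  obtain ⟨r₁, hr₁, hnear⟩ := hf.exists_abs_sub_le hρ hσ0 hp hp0
  refine ⟨r₁ / 2, half_pos hr₁, fun r hr hrr₁ w hw0 hwr => ?_⟩
  set a := σ * r / ρ 0 (horizLine i 1) with ha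
  have ha0 : 0 < a := by positivity
  have hline : ∀ u, |u| ≤ a → heisMul p (heisMul w (horizLine i u)) ∈ U ∧
      |f (heisMul p (heisMul w (horizLine i u))) - u| ≤ a := fun u hu => by
    rw [ha, le_div_iff₀ hN] at hu
    have hdist : ρ p (heisMul p (heisMul w (horizLine i u))) ≤ 2 * r := by
      rw [hρ.self_heisMul]
      have hwu := hρ.zero_heisMul_le w (horizLine i u)
      rw [hρ.zero_horizLine] at hwu
      nlinarith
    obtain ⟨hmem, hclose⟩ := hnear _ (hdist.trans_lt (by linarith))
    rw [heisInv_heisMul_cancel_left, fst_heisMul_apply, hw0, zero_add,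
      fst_horizLine_self] at hclose
    refine ⟨hmem, (le_div_iff₀ hN).2 ?_⟩
    nlinarith [mul_le_mul_of_nonneg_left hdist hσ0.le]
  have hcont : ContinuousOn (fun u => f (heisMul p (heisMul w (horizLine i u)))) (Icc (-a) a) :=
    (hf.continuousOn hρ i).comp
      ((continuous_heisMul_left p).comp (continuous_heisMul_horizLine i w)).continuousOn
      fun u hu => (hline u (abs_le.2 hu)).1
  have hneg : f (heisMul p (heisMul w (horizLine i (-a)))) ≤ 0 := by
    linarith [le_abs_self (f (heisMul p (heisMul w (horizLine i (-a)))) - -a),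
      (hline (-a) (by rw [abs_neg, abs_of_pos ha0])).2]
  have hpos : 0 ≤ f (heisMul p (heisMul w (horizLine i a))) := by
    linarith [neg_abs_le (f (heisMul p (heisMul w (horizLine i a))) - a),
      (hline a (abs_of_pos ha0).le).2]
  obtain ⟨u, hu, hu0⟩ := intermediate_value_Icc (neg_le_self ha0.le) hcont ⟨hneg, hpos⟩
  exact ⟨u, (le_div_iff₀ hN).1 (abs_le.2 hu), (hline u (abs_le.2 hu)).1, hu0⟩

lemma exists_heisDil_image_inter_subset (hσ0 : 0 < σ) (hσ : σ ≤ 1) (hF : IsInvariantGauge ρ F)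
    {E : Set (Heis n)} (hE : (E, (1 : ℝ)) ∈ F) (h0E : 0 ∈ E) {p : Heis n} (hp : p ∈ U)
    (hp0 : f p = 0) :
    ∃ r₀ > 0, ∀ r, 0 < r → r < r₀ → ∃ G, (G, r + 2 * (σ * r)) ∈ F ∧ p ∈ G ∧
      heisDil r '' E ∩ {w | w.1 i = 0} ⊆
        vertProj i '' (heisMul (heisInv p) '' (G ∩ {x ∈ U | f x = 0})) := by
  obtain ⟨r₀, hr₀, hline⟩ := hf.exists_heisMul_horizLine_mem hρ hσ0 hσ hp hp0
  refine ⟨r₀, hr₀, fun r hr hrr₀ => ?_⟩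
  have hdil := hF.heisDil_mem r hr _ hE
  have h0dil : (0 : Heis n) ∈ heisDil r '' E := ⟨0, h0E, heisDil_zero r⟩
  rw [mul_one] at hdil
  obtain ⟨G, hG, hEG⟩ := hF.exists_enlargement _ (hF.heisMul_mem hρ p hdil) (σ * r) (by positivity)
  refine ⟨G, hG, hEG p ⟨0, h0dil, heisMul_zero p⟩ p ?_, ?_⟩
  · rw [(hρ.eq_zero_iff p p).2 rfl]
    positivity
  · rintro w ⟨hw, hw0⟩
    obtain ⟨u, hu, hmem⟩ := hline r hr hrr₀ w hw0 (hF.dist_le _ hdil 0 h0dil w hw)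
    refine ⟨_, ⟨_, ⟨hEG (heisMul p w) ⟨w, hw, rfl⟩ _ ?_, hmem⟩,
      heisInv_heisMul_cancel_left p _⟩, ?_⟩
    · rwa [hρ.heisMul_left, hρ.self_heisMul, hρ.zero_horizLine]
    · rw [vertProj_heisMul_horizLine, vertProj_of_apply_eq_zero hw0]

lemma exists_mem_le_surfaceMeasure (hσ0 : 0 < σ) (hσ : σ ≤ 1) (hF : IsInvariantGauge ρ F)
    {E : Set (Heis n)} (hE : (E, (1 : ℝ)) ∈ F) (h0E : 0 ∈ E) {p : Heis n} (hp : p ∈ U)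
    (hp0 : f p = 0) {ε : ℝ} (hε : 0 < ε) :
    ∃ e ∈ F, p ∈ e.1 ∧ e.2 < ε ∧
      vertMeasure i E / ENNReal.ofReal (1 + 2 * σ) ^ (2 * (n : ℝ) + 1) *
        ENNReal.ofReal e.2 ^ (2 * (n : ℝ) + 1) ≤ surfaceMeasure i {x ∈ U | f x = 0} e.1 := by
  have hd : 0 ≤ 2 * (n : ℝ) + 1 := by positivity
  obtain ⟨r₀, hr₀, hcover⟩ := hf.exists_heisDil_image_inter_subset hρ hσ0 hσ hF hE h0E hp hp0
  obtain ⟨r, hr, hrmin⟩ : ∃ r, 0 < r ∧ 3 * r < min r₀ ε :=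
    ⟨min r₀ ε / 4, by positivity, by linarith [lt_min hr₀ hε]⟩
  obtain ⟨hrr₀, hrε⟩ := lt_min_iff.1 hrmin
  obtain ⟨G, hG, hpG, hsub⟩ := hcover r hr (by linarith)
  refine ⟨_, hG, hpG, ?_, ?_⟩
  · dsimp only
    nlinarith
  · calc vertMeasure i E / ENNReal.ofReal (1 + 2 * σ) ^ (2 * (n : ℝ) + 1) *
          ENNReal.ofReal (r + 2 * (σ * r)) ^ (2 * (n : ℝ) + 1)
        = vertMeasure i (heisDil r '' E ∩ {w | w.1 i = 0}) := by
          rw [ofReal_add_two_mul_rpow hσ0.le hd, ← mul_assoc, ENNReal.div_mul_cancel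
              (ofReal_rpow_ne_zero (by positivity))
              (ENNReal.rpow_ne_top_of_nonneg hd ENNReal.ofReal_ne_top), mul_comm,
            vertMeasure_inter_hyperplane, vertMeasure_heisDil_image i hr]
      _ ≤ vertMeasure i (vertProj i '' (heisMul (heisInv p) '' (G ∩ {x ∈ U | f x = 0}))) :=
          measure_mono hsub
      _ = surfaceMeasure i {x ∈ U | f x = 0} G := by
          rw [vertMeasure_vertProj_heisMul_image,
            surfaceMeasure_apply (hf.measurableSet_zeros hρ) (hf.injOn_vertProj hρ hσ)]

lemma vertDensity_mul_gaugeMeasure_le (hσ0 : 0 < σ) (hσ : σ ≤ 1) (hF : IsInvariantGauge ρ F)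
    {A : Set (Heis n)} (hA : A ⊆ {x ∈ U | f x = 0}) :
    vertDensity i F * gaugeMeasure F (2 * (n : ℝ) + 1) A ≤
      ENNReal.ofReal (1 + 2 * σ) ^ (2 * (n : ℝ) + 1) *
        surfaceMeasure i {x ∈ U | f x = 0} A := by
  have hd : 0 ≤ 2 * (n : ℝ) + 1 := by positivity
  have hκ : ENNReal.ofReal (1 + 2 * σ) ^ (2 * (n : ℝ) + 1) ≠ 0 :=
    (ofReal_rpow_ne_zero (by positivity))
  have hκ' : ENNReal.ofReal (1 + 2 * σ) ^ (2 * (n : ℝ) + 1) ≠ ⊤ :=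
    ENNReal.rpow_ne_top_of_nonneg hd ENNReal.ofReal_ne_top
  have := isFiniteMeasure_surfaceMeasure (hf.measurableSet_zeros hρ) (hf.injOn_vertProj hρ hσ)
    (hf.isBounded.subset (sep_subset _ _))
  refine hF.vertDensity_mul_le hρ fun E hE h0E => ?_
  have hdensity := IsGauge.mul_gaugeMeasure_le_measure (hρ.isCompatibleDist i) hF.toIsGauge hd
    fun p hp ε hε =>
      hf.exists_mem_le_surfaceMeasure hρ hσ0 hσ hF hE h0E (hA hp).1 (hA hp).2 hε
  rwa [mul_comm (ENNReal.ofReal _ ^ _), ← ENNReal.div_le_iff hκ hκ', mul_comm, ← mul_div_assoc',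
    mul_comm]

lemma vertDensity_mul_gaugeMeasure_le_mul (hσ0 : 0 < σ) (hσ : σ ≤ 1) (hF : IsInvariantGauge ρ F)
    (hF' : IsInvariantGauge ρ F') {A : Set (Heis n)} (hA : A ⊆ {x ∈ U | f x = 0}) :
    vertDensity i F * gaugeMeasure F (2 * (n : ℝ) + 1) A ≤
      (ENNReal.ofReal (1 + 2 * σ) ^ (2 * (n : ℝ) + 1)) ^ 2 *
        (vertDensity i F' * gaugeMeasure F' (2 * (n : ℝ) + 1) A) :=
  calc vertDensity i F * gaugeMeasure F (2 * (n : ℝ) + 1) A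
      ≤ ENNReal.ofReal (1 + 2 * σ) ^ (2 * (n : ℝ) + 1) *
          surfaceMeasure i {x ∈ U | f x = 0} A :=
        hf.vertDensity_mul_gaugeMeasure_le hρ hσ0 hσ hF hA
    _ ≤ ENNReal.ofReal (1 + 2 * σ) ^ (2 * (n : ℝ) + 1) *
          (vertDensity i F' * ENNReal.ofReal (1 + 2 * σ) ^ (2 * (n : ℝ) + 1) *
            gaugeMeasure F' (2 * (n : ℝ) + 1) A) := by
        gcongr
        exact hf.surfaceMeasure_le hρ hσ0 hσ hF' hA
    _ = _ := by ring

end IsNearlyCoordOn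

end NearlyCoordinateFunctions

section Rotation

open Set Filter Topology MeasureTheory

variable {n : ℕ}

/-- The horizontal part `x + i y` of the point `(x, y, t)`, as a vector of `ℂⁿ`. -/
noncomputable def horizComplex (g : Heis n) : EuclideanSpace ℂ (Fin n) :=
  WithLp.toLp 2 fun j => (⟨g.1 j, g.2.1 j⟩ : ℂ)

lemma horizComplex_heisMul (p q : Heis n) :
    horizComplex (heisMul p q) = horizComplex p + horizComplex q := by
  ext j; apply Complex.ext <;> simp [horizComplex, heisMul]

lemma horizComplex_heisInv (p : Heis n) : horizComplex (heisInv p) = -horizComplex p := by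
  ext j; apply Complex.ext <;> simp [horizComplex, heisInv]

lemma horizComplex_heisDil (r : ℝ) (p : Heis n) :
    horizComplex (heisDil r p) = (r : ℂ) • horizComplex p := by
  ext j; apply Complex.ext <;> simp [horizComplex, heisDil]

lemma re_inner_horizComplex (p q : Heis n) :
    (inner ℂ (horizComplex p) (horizComplex q)).re = ∑ j, (p.1 j * q.1 j + p.2.1 j * q.2.1 j) := by
  rw [PiLp.inner_apply, Complex.re_sum]
  refine Finset.sum_congr rfl fun j _ => ?_
  simp only [horizComplex, RCLike.inner_apply, Complex.mul_re, Complex.conj_re, Complex.conj_im]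
  ring

lemma im_inner_horizComplex (p q : Heis n) :
    (inner ℂ (horizComplex p) (horizComplex q)).im = ∑ j, (p.1 j * q.2.1 j - q.1 j * p.2.1 j) := by
  rw [PiLp.inner_apply, Complex.im_sum]
  refine Finset.sum_congr rfl fun j _ => ?_
  simp only [horizComplex, RCLike.inner_apply, Complex.mul_im, Complex.conj_re, Complex.conj_im]
  ring

lemma ext_horizComplex {p q : Heis n} (hhor : horizComplex p = horizComplex q)
    (hvert : p.2.2 = q.2.2) : p = q := by
  have hcoord : ∀ j, (⟨p.1 j, p.2.1 j⟩ : ℂ) = ⟨q.1 j, q.2.1 j⟩ := fun j => congrArg (· j) hhor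
  exact Prod.ext (funext fun j => congrArg Complex.re (hcoord j))
    (Prod.ext (funext fun j => congrArg Complex.im (hcoord j)) hvert)

lemma continuous_horizComplex : Continuous (horizComplex : Heis n → EuclideanSpace ℂ (Fin n)) := by
  refine (PiLp.continuous_toLp 2 _).comp (continuous_pi fun j => ?_)
  simp only [Complex.mk_eq_add_mul_I]
  fun_prop

/-- The rotation of the Heisenberg group that acts on the horizontal part by the unitary map `T`
and fixes the centre. -/
noncomputable def heisRot (T : EuclideanSpace ℂ (Fin n) ≃ₗᵢ[ℂ] EuclideanSpace ℂ (Fin n))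
    (g : Heis n) : Heis n :=
  (fun j => (T (horizComplex g) j).re, fun j => (T (horizComplex g) j).im, g.2.2)

variable (T : EuclideanSpace ℂ (Fin n) ≃ₗᵢ[ℂ] EuclideanSpace ℂ (Fin n))

lemma horizComplex_heisRot (g : Heis n) : horizComplex (heisRot T g) = T (horizComplex g) := rfl

lemma heisRot_symm_heisRot (g : Heis n) : heisRot T.symm (heisRot T g) = g :=
  ext_horizComplex (by simp only [horizComplex_heisRot, LinearIsometryEquiv.symm_apply_apply]) rfl

lemma heisRot_heisRot_symm (g : Heis n) : heisRot T (heisRot T.symm g) = g :=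
  ext_horizComplex (by simp only [horizComplex_heisRot, LinearIsometryEquiv.apply_symm_apply]) rfl

lemma heisRot_surjective : Function.Surjective (heisRot T) :=
  fun g => ⟨_, heisRot_heisRot_symm T g⟩

lemma continuous_heisRot : Continuous (heisRot T) := by
  have hcoord : ∀ j, Continuous fun g : Heis n => T (horizComplex g) j := fun j =>
    (PiLp.continuous_apply 2 _ j).comp (T.continuous.comp continuous_horizComplex)
  exact (continuous_pi fun j => Complex.continuous_re.comp (hcoord j)).prodMk
    ((continuous_pi fun j => Complex.continuous_im.comp (hcoord j)).prodMk (by fun_prop))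

-- The group law involves the horizontal parts through the imaginary part of their inner product.
lemma heisRot_heisMul (p q : Heis n) :
    heisRot T (heisMul p q) = heisMul (heisRot T p) (heisRot T q) := by
  refine ext_horizComplex ?_ ?_
  · simp only [horizComplex_heisRot, horizComplex_heisMul, map_add]
  · simp only [heisMul, ← im_inner_horizComplex, horizComplex_heisRot, T.inner_map_map]
    rfl

lemma heisRot_heisInv (p : Heis n) : heisRot T (heisInv p) = heisInv (heisRot T p) :=
  ext_horizComplex (by simp only [horizComplex_heisRot, horizComplex_heisInv, map_neg]) rfl

lemma heisRot_heisDil (r : ℝ) (p : Heis n) :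
    heisRot T (heisDil r p) = heisDil r (heisRot T p) :=
  ext_horizComplex (by simp only [horizComplex_heisRot, horizComplex_heisDil, map_smul]) rfl

lemma horSq_heisRot (g : Heis n) : horSq (heisRot T g).1 (heisRot T g).2.1 = horSq g.1 g.2.1 := by
  simp only [horSq, pow_two, ← re_inner_horizComplex, horizComplex_heisRot, T.inner_map_map]

variable {ρ : Heis n → Heis n → ℝ}

lemma IsRotHomogDist.zero_heisRot (hρ : IsRotHomogDist ρ) (g : Heis n) :
    ρ 0 (heisRot T g) = ρ 0 g :=
  hρ.eq_of_horSq_eq _ _ _ _ _ (horSq_heisRot T g)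

lemma IsRotHomogDist.heisRot_heisRot (hρ : IsRotHomogDist ρ) (p q : Heis n) :
    ρ (heisRot T p) (heisRot T q) = ρ p q := by
  rw [hρ.eq_zero_heisInv_heisMul, ← heisRot_heisInv, ← heisRot_heisMul, hρ.zero_heisRot,
    ← hρ.eq_zero_heisInv_heisMul]

lemma IsInvariantGauge.gaugeMeasure_heisRot_image {F : Set (Set (Heis n) × ℝ)}
    (hF : IsInvariantGauge ρ F) (hρ : IsRotHomogDist ρ) (d : ℝ) (A : Set (Heis n)) :
    gaugeMeasure F d (heisRot T '' A) = gaugeMeasure F d A := by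
  have hle : ∀ (T : EuclideanSpace ℂ (Fin n) ≃ₗᵢ[ℂ] EuclideanSpace ℂ (Fin n)) (A : Set (Heis n)),
      gaugeMeasure F d (heisRot T '' A) ≤ gaugeMeasure F d A := fun T =>
    gaugeMeasure_image_le _ (hF.image_mem _ (heisRot_surjective T) (hρ.heisRot_heisRot T))
  refine (hle T A).antisymm ?_
  simpa only [image_image, heisRot_symm_heisRot, image_id'] using hle T.symm (heisRot T '' A)

lemma IsHeisHomMorphR.exists_eq_re_inner {L : Heis n → ℝ} (hL : IsHeisHomMorphR L) :
    ∃ v, ∀ g, L g = (inner ℂ v (horizComplex g)).re := by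
  refine ⟨horizComplex (fun j => L (fun k => if j = k then 1 else 0, 0, 0),
    fun j => L (0, fun k => if j = k then 1 else 0, 0), 0), fun g => ?_⟩
  have hfst : hL.toLinearMap (g.1, 0) = _ :=
    LinearMap.pi_apply_eq_sum_univ (hL.toLinearMap.comp (LinearMap.inl ℝ _ _)) g.1
  have hsnd : hL.toLinearMap (0, g.2.1) = _ :=
    LinearMap.pi_apply_eq_sum_univ (hL.toLinearMap.comp (LinearMap.inr ℝ _ _)) g.2.1
  rw [re_inner_horizComplex, ← hL.toLinearMap_apply, ← add_zero g.1, ← zero_add g.2.1,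
    ← Prod.mk_add_mk, map_add, hfst, hsnd, ← Finset.sum_add_distrib]
  simp only [smul_eq_mul, add_zero, zero_add]
  exact Finset.sum_congr rfl fun j _ => congrArg₂ _ (mul_comm _ _) (mul_comm _ _)

lemma exists_linearIsometryEquiv_inner_eq (i : Fin n) {v : EuclideanSpace ℂ (Fin n)} (hv : v ≠ 0) :
    ∃ T : EuclideanSpace ℂ (Fin n) ≃ₗᵢ[ℂ] EuclideanSpace ℂ (Fin n),
      ∀ z, inner ℂ v z = (‖v‖ : ℂ) * T z i := by
  have hnorm : (‖v‖ : ℂ) ≠ 0 := by exact_mod_cast norm_ne_zero_iff.2 hv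
  have horth : Orthonormal ℂ (({i} : Set (Fin n)).domRestrict fun _ => (‖v‖ : ℂ)⁻¹ • v) :=
    orthonormal_subsingleton_iff.2 fun _ => by
      simp [norm_smul, norm_ne_zero_iff.2 hv]
  obtain ⟨B, hB⟩ := horth.exists_orthonormalBasis_extension_of_card_eq (by simp)
  refine ⟨B.repr, fun z => ?_⟩
  rw [B.repr_apply_apply, hB i rfl, inner_smul_left, map_inv₀, Complex.conj_ofReal,
    mul_inv_cancel_left₀ hnorm]

lemma IsHeisHomMorphR.exists_eq_mul_heisRot (i : Fin n) {L : Heis n → ℝ} (hL : IsHeisHomMorphR L)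
    (hL0 : L ≠ 0) : ∃ (T : EuclideanSpace ℂ (Fin n) ≃ₗᵢ[ℂ] EuclideanSpace ℂ (Fin n)) (c : ℝ),
      0 < c ∧ ∀ g, L g = c * (heisRot T g).1 i := by
  obtain ⟨v, hv⟩ := hL.exists_eq_re_inner
  have hv0 : v ≠ 0 := by
    rintro rfl
    exact hL0 (funext fun g => by simp [hv])
  obtain ⟨T, hT⟩ := exists_linearIsometryEquiv_inner_eq i hv0
  refine ⟨T, ‖v‖, norm_pos_iff.2 hv0, fun g => ?_⟩
  rw [hv, hT, Complex.re_ofReal_mul]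
  rfl

lemma IsPansuC1On.comp_heisRot {Ω : Set (Heis n)} {f : Heis n → ℝ} {D : Heis n → Heis n → ℝ}
    (hρ : IsRotHomogDist ρ) (hf : IsPansuC1On ρ Ω f D) :
    IsPansuC1On ρ (heisRot T ⁻¹' Ω) (fun x => f (heisRot T x))
      (fun q x => D (heisRot T q) (heisRot T x)) where
  isHeisHomMorphR q hq := by
    obtain ⟨hmul, hdil⟩ := hf.isHeisHomMorphR _ hq
    exact ⟨fun p p' => by simp only [heisRot_heisMul, hmul],
      fun r hr p => by simp only [heisRot_heisDil, hdil r hr]⟩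
  differential q hq ε hε := by
    obtain ⟨r, hr, hfr⟩ := hf.differential _ hq ε hε
    refine ⟨r, hr, fun x hx => ?_⟩
    simpa only [heisRot_heisMul, heisRot_heisInv, hρ.heisRot_heisRot] using
      hfr (heisRot T x) (by rwa [hρ.heisRot_heisRot])
  continuous q hq ε hε := by
    obtain ⟨r, hr, hD⟩ := hf.continuous _ hq ε hε
    refine ⟨r, hr, fun q' hq' hqq' x => ?_⟩
    simpa only [hρ.zero_heisRot] using
      hD (heisRot T q') hq' (by rwa [hρ.heisRot_heisRot]) (heisRot T x)

end Rotation

section LocalComparison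

open Set Filter Topology MeasureTheory

variable {n : ℕ} {ρ : Heis n → Heis n → ℝ} {Ω : Set (Heis n)} {f : Heis n → ℝ}
  {D : Heis n → Heis n → ℝ} {i : Fin n} {K : ℝ≥0∞}

/-- Normalised by their vertical densities, the measures of any two invariant gauges agree up to
the factor `K` on all subsets of `S`. -/
def AreGaugesComparableOn (ρ : Heis n → Heis n → ℝ) (i : Fin n) (K : ℝ≥0∞)
    (S : Set (Heis n)) : Prop :=
  ∀ F F', IsInvariantGauge ρ F → IsInvariantGauge ρ F' → ∀ A ⊆ S,
    vertDensity i F * gaugeMeasure F (2 * (n : ℝ) + 1) A ≤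
      K * (vertDensity i F' * gaugeMeasure F' (2 * (n : ℝ) + 1) A)

lemma areGaugesComparableOn_empty : AreGaugesComparableOn ρ i K ∅ := by
  rintro F F' - - A hA
  rw [subset_empty_iff.1 hA, measure_empty, mul_zero]
  exact zero_le

lemma AreGaugesComparableOn.of_heisRot_image (hρ : IsRotHomogDist ρ)
    (T : EuclideanSpace ℂ (Fin n) ≃ₗᵢ[ℂ] EuclideanSpace ℂ (Fin n)) {S : Set (Heis n)}
    (h : AreGaugesComparableOn ρ i K (heisRot T '' S)) : AreGaugesComparableOn ρ i K S := by
  intro F F' hF hF' A hA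
  simpa only [hF.gaugeMeasure_heisRot_image T hρ, hF'.gaugeMeasure_heisRot_image T hρ] using
    h F F' hF hF' _ (image_mono hA)

lemma exists_ofReal_one_add_rpow_sq_le (hK : 1 < K) (d : ℝ) :
    ∃ σ : ℝ, 0 < σ ∧ σ ≤ 1 ∧ (ENNReal.ofReal (1 + 2 * σ) ^ d) ^ 2 ≤ K := by
  have hcont : Continuous fun σ : ℝ => (ENNReal.ofReal (1 + 2 * σ) ^ d) ^ 2 :=
    (ENNReal.continuous_pow 2).comp (ENNReal.continuous_rpow_const.comp
      (ENNReal.continuous_ofReal.comp (by fun_prop)))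
  have hlt := (hcont.tendsto 0).eventually (gt_mem_nhds (a := K) (by simpa using hK))
  obtain ⟨σ, hσK, hσ0, hσ1⟩ :=
    ((hlt.filter_mono nhdsWithin_le_nhds).and (Ioc_mem_nhdsGT one_pos)).exists
  exact ⟨σ, hσ0, hσ1, hσK.le⟩

lemma IsPansuC1On.exists_isNearlyCoordOn_ball (hf : IsPansuC1On ρ Ω f D) (hρ : IsRotHomogDist ρ)
    (hΩ : IsOpen Ω) {p : Heis n} (hp : p ∈ Ω) (hDp : ∀ x, D p x = x.1 i) {σ : ℝ} (hσ : 0 < σ) :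
    ∃ η > 0, Metric.ball p η ⊆ Ω ∧ IsNearlyCoordOn ρ i σ (Metric.ball p η) f D := by
  have hN := hρ.zero_horizLine_one_pos i
  obtain ⟨r, hr, hD⟩ := hf.continuous p hp (σ / (4 * ρ 0 (horizLine i 1))) (by positivity)
  obtain ⟨η, hη, hball⟩ :=
    Metric.mem_nhds_iff.1 (inter_mem (hΩ.mem_nhds hp) (hρ.eventually_lt i p hr))
  have hballΩ : Metric.ball p η ⊆ Ω := hball.trans inter_subset_left
  refine ⟨η, hη, hballΩ, hf.mono hballΩ, Metric.isOpen_ball, convex_ball p η,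
    Metric.isBounded_ball, fun q hq x => ?_⟩
  have hclose := hD q (hballΩ hq) (hball hq).2 x
  rwa [hDp, abs_sub_comm, div_mul_eq_mul_div, le_div_iff₀' (by positivity)] at hclose

lemma IsPansuC1On.exists_comparable_zeros_of_eq_coord (hf : IsPansuC1On ρ Ω f D)
    (hρ : IsRotHomogDist ρ) (hK : 1 < K) (hΩ : IsOpen Ω) {p : Heis n} (hp : p ∈ Ω)
    (hDp : ∀ x, D p x = x.1 i) :
    ∃ U, IsOpen U ∧ p ∈ U ∧ U ⊆ Ω ∧ MeasurableSet {x ∈ U | f x = 0} ∧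
      AreGaugesComparableOn ρ i K {x ∈ U | f x = 0} := by
  obtain ⟨σ, hσ0, hσ1, hσK⟩ := exists_ofReal_one_add_rpow_sq_le hK (2 * (n : ℝ) + 1)
  obtain ⟨η, hη, hballΩ, hnear⟩ := hf.exists_isNearlyCoordOn_ball hρ hΩ hp hDp hσ0
  refine ⟨_, Metric.isOpen_ball, Metric.mem_ball_self hη, hballΩ, hnear.measurableSet_zeros hρ, ?_⟩
  intro F F' hF hF' A hA
  exact (hnear.vertDensity_mul_gaugeMeasure_le_mul hρ hσ0 hσ1 hF hF' hA).trans (by gcongr)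

lemma IsPansuC1On.exists_comparable_zeros (hf : IsPansuC1On ρ Ω f D) (hρ : IsRotHomogDist ρ)
    (i : Fin n) (hK : 1 < K) (hΩ : IsOpen Ω) {p : Heis n} (hp : p ∈ Ω) (hDp : D p ≠ 0) :
    ∃ U, IsOpen U ∧ p ∈ U ∧ U ⊆ Ω ∧ MeasurableSet {x ∈ U | f x = 0} ∧
      AreGaugesComparableOn ρ i K {x ∈ U | f x = 0} := by
  obtain ⟨T, c, hc, hT⟩ := (hf.isHeisHomMorphR p hp).exists_eq_mul_heisRot i hDp
  obtain ⟨U, hU, hpU, hUΩ, hmeas, hcomp⟩ :=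
    ((hf.comp_heisRot T.symm hρ).div_const hc).exists_comparable_zeros_of_eq_coord (i := i) hρ hK
      (hΩ.preimage (continuous_heisRot T.symm)) (p := heisRot T p)
      (by rwa [mem_preimage, heisRot_symm_heisRot])
      (fun x => by
        rw [heisRot_symm_heisRot, hT, heisRot_heisRot_symm, mul_div_cancel_left₀ _ hc.ne'])
  have hzeros : heisRot T ⁻¹' {x ∈ U | f (heisRot T.symm x) / c = 0} =
      {x ∈ heisRot T ⁻¹' U | f x = 0} := by
    ext x
    simp only [mem_preimage, mem_ofPred_eq, heisRot_symm_heisRot, div_eq_zero_iff, hc.ne', or_false]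
  refine ⟨heisRot T ⁻¹' U, hU.preimage (continuous_heisRot T), hpU, fun x hx => ?_, ?_, ?_⟩
  · simpa only [mem_preimage, heisRot_symm_heisRot] using hUΩ hx
  · exact hzeros ▸ (continuous_heisRot T).measurable hmeas
  · refine .of_heisRot_image hρ T ?_
    rwa [← hzeros, image_preimage_eq _ (heisRot_surjective T)]

end LocalComparison

section GlobalComparison

open Set Filter Topology MeasureTheory

variable {n : ℕ} {ρ : Heis n → Heis n → ℝ} {i : Fin n} {K : ℝ≥0∞}

lemma IsC1HHypersurface.exists_mem_nhdsWithin_comparable {Sig : Set (Heis n)}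
    (hSig : IsC1HHypersurface ρ Sig) (hρ : IsRotHomogDist ρ) (i : Fin n) (hK : 1 < K)
    {p : Heis n} (hp : p ∈ Sig) :
    ∃ G ∈ 𝓝[Sig] p, MeasurableSet G ∧ AreGaugesComparableOn ρ i K G := by
  obtain ⟨Ω, f, D, hΩ, hpΩ, hzeros, hdiff, hcont, hD⟩ := hSig p hp
  have hf : IsPansuC1On ρ Ω f D :=
    ⟨fun q hq => (hdiff q hq).1, fun q hq => (hdiff q hq).2, hcont⟩
  obtain ⟨U, hU, hpU, hUΩ, hmeas, hcomp⟩ :=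
    hf.exists_comparable_zeros hρ i hK hΩ hpΩ (hD p hpΩ).1
  refine ⟨_, ?_, hmeas, hcomp⟩
  filter_upwards [self_mem_nhdsWithin, mem_nhdsWithin_of_mem_nhds (hU.mem_nhds hpU)] with x hx hxU
  have hxΩ : x ∈ Sig ∩ Ω := ⟨hx, hUΩ hxU⟩
  exact ⟨hxU, (hzeros ▸ hxΩ).2⟩

lemma IsC1HHypersurface.exists_countable_cover_comparable {Sig : Set (Heis n)}
    (hSig : IsC1HHypersurface ρ Sig) (hρ : IsRotHomogDist ρ) (i : Fin n) (hK : 1 < K) :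
    ∃ 𝒢 : Set (Set (Heis n)), 𝒢.Countable ∧
      (∀ G ∈ 𝒢, MeasurableSet G ∧ AreGaugesComparableOn ρ i K G) ∧ Sig ⊆ ⋃₀ 𝒢 := by
  choose! G hG hGood using fun p (hp : p ∈ Sig) =>
    hSig.exists_mem_nhdsWithin_comparable hρ i hK hp
  obtain ⟨t, htSig, htc, hcover⟩ := TopologicalSpace.countable_cover_nhdsWithin hG
  exact ⟨G '' t, htc.image G, forall_mem_image.2 fun x hx => hGood x (htSig hx),
    by rwa [sUnion_image]⟩

lemma exists_seq_cover_comparable {Sigs : ℕ → Set (Heis n)}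
    (hSigs : ∀ j, IsC1HHypersurface ρ (Sigs j)) (hρ : IsRotHomogDist ρ) (i : Fin n) (hK : 1 < K) :
    ∃ G : ℕ → Set (Heis n), (∀ k, MeasurableSet (G k)) ∧
      (∀ k, AreGaugesComparableOn ρ i K (G k)) ∧ ⋃ j, Sigs j ⊆ ⋃ k, G k := by
  choose 𝒢 hcount hgood hcover using fun j =>
    (hSigs j).exists_countable_cover_comparable hρ i hK
  obtain ⟨G, hG⟩ := ((countable_iUnion hcount).insert ∅).exists_eq_range (insert_nonempty _ _)
  have hGgood : ∀ k, MeasurableSet (G k) ∧ AreGaugesComparableOn ρ i K (G k) := fun k => by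
    rcases hG ▸ mem_range_self k with hempty | hmem
    · exact hempty ▸ ⟨MeasurableSet.empty, areGaugesComparableOn_empty⟩
    · obtain ⟨j, hj⟩ := mem_iUnion.1 hmem
      exact hgood j _ hj
  refine ⟨G, fun k => (hGgood k).1, fun k => (hGgood k).2, iUnion_subset fun j x hx => ?_⟩
  obtain ⟨S, hS, hxS⟩ := hcover j hx
  obtain ⟨k, rfl⟩ : S ∈ range G := hG ▸ Or.inr (mem_iUnion.2 ⟨j, hS⟩)
  exact mem_iUnion.2 ⟨k, hxS⟩

variable {Sigs : ℕ → Set (Heis n)} {F F' : Set (Set (Heis n) × ℝ)} {A : Set (Heis n)}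

lemma IsRotHomogDist.vertDensity_mul_gaugeMeasure_le_mul (hρ : IsRotHomogDist ρ) (i : Fin n)
    (hK : 1 < K) (hSigs : ∀ j, IsC1HHypersurface ρ (Sigs j)) (hF : IsInvariantGauge ρ F)
    (hF' : IsInvariantGauge ρ F') (hA : gaugeMeasure F (2 * (n : ℝ) + 1) (A \ ⋃ j, Sigs j) = 0) :
    vertDensity i F * gaugeMeasure F (2 * (n : ℝ) + 1) A ≤
      K * (vertDensity i F' * gaugeMeasure F' (2 * (n : ℝ) + 1) A) := by
  obtain ⟨G, hmeas, hcomp, hcover⟩ := exists_seq_cover_comparable hSigs hρ i hK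
  have hsub : A ⊆ (A \ ⋃ j, Sigs j) ∪ ⋃ k, A ∩ disjointed G k := by
    rw [← inter_iUnion, iUnion_disjointed]
    exact fun x hx => or_iff_not_imp_left.2 fun hxS =>
      ⟨hx, hcover (not_not.1 fun hxSigs => hxS ⟨hx, hxSigs⟩)⟩
  have hle : gaugeMeasure F (2 * (n : ℝ) + 1) A ≤
      ∑' k, gaugeMeasure F (2 * (n : ℝ) + 1) (A ∩ disjointed G k) :=
    calc gaugeMeasure F (2 * (n : ℝ) + 1) A
        ≤ gaugeMeasure F (2 * (n : ℝ) + 1) (A \ ⋃ j, Sigs j) +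
          gaugeMeasure F (2 * (n : ℝ) + 1) (⋃ k, A ∩ disjointed G k) :=
          (measure_mono hsub).trans (measure_union_le _ _)
      _ ≤ ∑' k, gaugeMeasure F (2 * (n : ℝ) + 1) (A ∩ disjointed G k) := by
          rw [hA, zero_add]
          exact measure_iUnion_le _
  calc vertDensity i F * gaugeMeasure F (2 * (n : ℝ) + 1) A
      ≤ vertDensity i F * ∑' k, gaugeMeasure F (2 * (n : ℝ) + 1) (A ∩ disjointed G k) := by
        gcongr
    _ = ∑' k, vertDensity i F * gaugeMeasure F (2 * (n : ℝ) + 1) (A ∩ disjointed G k) :=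
        ENNReal.tsum_mul_left.symm
    _ ≤ ∑' k, K * (vertDensity i F' *
          gaugeMeasure F' (2 * (n : ℝ) + 1) (A ∩ disjointed G k)) :=
        ENNReal.tsum_le_tsum fun k => hcomp k F F' hF hF' _
          (inter_subset_right.trans (disjointed_subset G k))
    _ = K * (vertDensity i F' *
          ∑' k, gaugeMeasure F' (2 * (n : ℝ) + 1) (A ∩ disjointed G k)) := by
        rw [ENNReal.tsum_mul_left, ENNReal.tsum_mul_left]
    _ ≤ K * (vertDensity i F' * gaugeMeasure F' (2 * (n : ℝ) + 1) A) := by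
        gcongr
        exact tsum_gaugeMeasure_inter_le (hρ.isCompatibleDist i) hF'.toIsGauge
          (fun k => .disjointed hmeas k) (disjoint_disjointed G) A

lemma IsRotHomogDist.vertDensity_mul_gaugeMeasure_le (hρ : IsRotHomogDist ρ) (i : Fin n)
    (hSigs : ∀ j, IsC1HHypersurface ρ (Sigs j)) (hF : IsInvariantGauge ρ F)
    (hF' : IsInvariantGauge ρ F') (hA : gaugeMeasure F (2 * (n : ℝ) + 1) (A \ ⋃ j, Sigs j) = 0) :
    vertDensity i F * gaugeMeasure F (2 * (n : ℝ) + 1) A ≤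
      vertDensity i F' * gaugeMeasure F' (2 * (n : ℝ) + 1) A := by
  have hlim : Tendsto
      (fun K => K * (vertDensity i F' * gaugeMeasure F' (2 * (n : ℝ) + 1) A)) (𝓝[>] 1)
      (𝓝 (1 * (vertDensity i F' * gaugeMeasure F' (2 * (n : ℝ) + 1) A))) :=
    ENNReal.Tendsto.mul_const (tendsto_id.mono_left nhdsWithin_le_nhds) (Or.inl one_ne_zero)
  have : (𝓝[>] (1 : ℝ≥0∞)).NeBot := nhdsGT_neBot_of_exists_gt ⟨⊤, ENNReal.one_lt_top⟩
  rw [one_mul] at hlim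
  refine ge_of_tendsto hlim ?_
  filter_upwards [self_mem_nhdsWithin] with K hK
  exact hρ.vertDensity_mul_gaugeMeasure_le_mul i hK hSigs hF hF' hA

end GlobalComparison

section SphericalHausdorff

open Set MeasureTheory

variable {n : ℕ} {ρ : Heis n → Heis n → ℝ}

/-- The ratio of the spherical to the Hausdorff measure on rectifiable sets: the vertical density
of the Hausdorff gauge over that of the spherical gauge. The coordinate `i` only serves to
select a vertical hyperplane; all of them are equivalent under rotations. -/
noncomputable def sphHausRatio (ρ : Heis n → Heis n → ℝ) (i : Fin n) : ℝ≥0∞ :=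
  vertDensity i (diamGauge ρ) / vertDensity i (ballGauge ρ)

lemma IsRotHomogDist.one_le_sphHausRatio (hρ : IsRotHomogDist ρ) (i : Fin n) :
    1 ≤ sphHausRatio ρ i := by
  have hball := (hρ.isInvariantGauge_ballGauge i).toIsGauge
  rw [sphHausRatio, ENNReal.le_div_iff_mul_le (Or.inl (hρ.vertDensity_ne_zero hball i))
    (Or.inl (hρ.vertDensity_ne_top hball i)), one_mul]
  exact hball.vertDensity_le_vertDensity_diamGauge i

lemma IsRotHomogDist.sphHausRatio_le (hρ : IsRotHomogDist ρ) (i : Fin n) :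
    sphHausRatio ρ i ≤ ENNReal.ofReal (2 ^ (2 * n + 1)) := by
  refine ENNReal.div_le_of_le_mul' ((hρ.vertDensity_diamGauge_le i).trans_eq ?_)
  rw [ENNReal.ofReal_rpow_of_pos two_pos]
  norm_cast

lemma IsRotHomogDist.sphMeasFun_eq (hρ : IsRotHomogDist ρ) (i : Fin n) {Sigs : ℕ → Set (Heis n)}
    (hSigs : ∀ j, IsC1HHypersurface ρ (Sigs j)) {A : Set (Heis n)}
    (hA : hausMeasFun ρ (2 * (n : ℝ) + 1) (A \ ⋃ j, Sigs j) = 0) :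
    sphMeasFun ρ (2 * (n : ℝ) + 1) A =
      sphHausRatio ρ i * hausMeasFun ρ (2 * (n : ℝ) + 1) A := by
  have hd : 0 < 2 * (n : ℝ) + 1 := by positivity
  have hball := hρ.isInvariantGauge_ballGauge i
  have hdiam := hρ.isInvariantGauge_diamGauge i
  rw [hausMeasFun_eq_gaugeMeasure hd] at hA
  have hA' : gaugeMeasure (ballGauge ρ) (2 * (n : ℝ) + 1) (A \ ⋃ j, Sigs j) = 0 := by
    simpa only [hA, mul_zero, nonpos_iff_eq_zero] using
      gaugeMeasure_le_mul_of_forall_exists hd.le two_pos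
        (fun e he => exists_mem_ballGauge_superset (ρ := ρ) he) (A \ ⋃ j, Sigs j)
  have heq := (hρ.vertDensity_mul_gaugeMeasure_le i hSigs hball hdiam hA').antisymm
    (hρ.vertDensity_mul_gaugeMeasure_le i hSigs hdiam hball hA)
  rw [sphMeasFun_eq_gaugeMeasure hd, hausMeasFun_eq_gaugeMeasure hd, sphHausRatio,
    ENNReal.mul_comm_div, ← mul_div_assoc, ← heq, mul_comm (vertDensity i _),
    ENNReal.mul_div_cancel_right (hρ.vertDensity_ne_zero hball.toIsGauge i)
      (hρ.vertDensity_ne_top hball.toIsGauge i)]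

end SphericalHausdorff

theorem spherical_vs_hausdorff_heisenberg_general
    (n : ℕ) (hn : 1 ≤ n)
    (ρ : Heis n → Heis n → ℝ)
    (hρ_zero : ∀ p q : Heis n, ρ p q = 0 ↔ p = q)
    (hρ_symm : ∀ p q : Heis n, ρ p q = ρ q p)
    (hρ_triangle : ∀ p q r : Heis n, ρ p r ≤ ρ p q + ρ q r)
    (hρ_left : ∀ g p q : Heis n, ρ (heisMul g p) (heisMul g q) = ρ p q)
    (hρ_hom : ∀ lam : ℝ, 0 < lam → ∀ p q : Heis n,
      ρ (heisDil lam p) (heisDil lam q) = lam * ρ p q)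
    (hρ_rot : ∀ (x y x' y' : Fin n → ℝ) (t : ℝ), horSq x y = horSq x' y' →
      ρ 0 (x, y, t) = ρ 0 (x', y', t)) :
    ∃ C : ℝ, 1 ≤ C ∧ C ≤ 2 ^ (2 * n + 1) ∧
      ∀ R : Set (Heis n),
        (∃ Sigs : ℕ → Set (Heis n),
          (∀ j, IsC1HHypersurface ρ (Sigs j)) ∧
          hausMeasFun ρ (2 * (n : ℝ) + 1) (R \ ⋃ j, Sigs j) = 0) →
        ∀ E : Set (Heis n),
          sphMeasFun ρ (2 * (n : ℝ) + 1) (E ∩ R) =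
            ENNReal.ofReal C * hausMeasFun ρ (2 * (n : ℝ) + 1) (E ∩ R) := by
  have hρ : IsRotHomogDist ρ := ⟨hρ_zero, hρ_symm, hρ_triangle, hρ_left, hρ_hom, hρ_rot⟩
  let i : Fin n := ⟨0, hn⟩
  have hfin : sphHausRatio ρ i ≠ ⊤ :=
    ne_top_of_le_ne_top ENNReal.ofReal_ne_top (hρ.sphHausRatio_le i)
  refine ⟨(sphHausRatio ρ i).toReal, ?_, ?_, ?_⟩
  · exact ENNReal.toReal_one ▸ ENNReal.toReal_mono hfin (hρ.one_le_sphHausRatio i)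
  · exact ENNReal.toReal_le_of_le_ofReal (by positivity) (hρ.sphHausRatio_le i)
  · rintro R ⟨Sigs, hSigs, hnull⟩ E
    rw [ENNReal.ofReal_toReal hfin]
    refine hρ.sphMeasFun_eq i hSigs ?_
    rw [hausMeasFun_eq_gaugeMeasure (by positivity)] at hnull ⊢
    exact MeasureTheory.measure_mono_null (Set.sdiff_subset_sdiff_left Set.inter_subset_right) hnull

/-- In the Heisenberg group `H^n` with a rotationally invariant homogeneous distance `ρ`,
there is a single constant `C ∈ [1, 2^(2n+1)]` such that
`S^(2n+1) ⌞ R = C · H^(2n+1) ⌞ R` for every `(H^n, ℝ)`-rectifiable set `R ⊆ H^n`. -/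
theorem spherical_vs_hausdorff_heisenberg
    (n : ℕ) (hn : 1 ≤ n)
    (ρ : Heis n → Heis n → ℝ)
    (hρ_zero : ∀ p q : Heis n, ρ p q = 0 ↔ p = q)
    (hρ_symm : ∀ p q : Heis n, ρ p q = ρ q p)
    (hρ_triangle : ∀ p q r : Heis n, ρ p r ≤ ρ p q + ρ q r)
    (hρ_left : ∀ g p q : Heis n, ρ (heisMul g p) (heisMul g q) = ρ p q)
    (hρ_hom : ∀ lam : ℝ, 0 < lam → ∀ p q : Heis n,
      ρ (heisDil lam p) (heisDil lam q) = lam * ρ p q)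
    (hρ_rot : ∀ (x y x' y' : Fin n → ℝ) (t : ℝ), horSq x y = horSq x' y' →
      ρ 0 (x, y, t) = ρ 0 (x', y', t)) :
    ∃ C : ℝ, 1 ≤ C ∧ C ≤ 2 ^ (2 * n + 1) ∧
      ∀ R : Set (Heis n),
        sphMeasFun ρ (2 * (n : ℝ) + 1) R < ⊤ →
        (∃ Sigs : ℕ → Set (Heis n),
          (∀ j, IsC1HHypersurface ρ (Sigs j)) ∧
          hausMeasFun ρ (2 * (n : ℝ) + 1) (R \ ⋃ j, Sigs j) = 0) →
        ∀ E : Set (Heis n),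
          sphMeasFun ρ (2 * (n : ℝ) + 1) (E ∩ R) =
            ENNReal.ofReal C * hausMeasFun ρ (2 * (n : ℝ) + 1) (E ∩ R) :=
  let ⟨C, hC1, hC2, hC⟩ := spherical_vs_hausdorff_heisenberg_general n hn ρ hρ_zero hρ_symm
    hρ_triangle hρ_left hρ_hom hρ_rot
  ⟨C, hC1, hC2, fun R _ => hC R⟩
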